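/- Let Δ be a simplicial complex with d = dim k[Δ]. If the reduced homology H̃_{i−1}([Δ]_{>j}; k) vanishes whenever i + j < d and 0 ≤ i ≤ ℓ, then k[Δ] satisfies Serre's condition (S_ℓ). -/

import Mathlib

open Finset

/-- An abstract simplicial complex on vertex type `V`, given by a finite, downward closed
family of finite subsets of `V` (its faces). -/
structure SComplex (V : Type) [DecidableEq V] where
  faces : Finset (Finset V)
  down_closed : ∀ ⦃s t : Finset V⦄, s ∈ faces → t ⊆ s → t ∈ faces

namespace SComplex

variable {V : Type} [DecidableEq V]

/-- `K.rank = d = dim k[Δ] = dim Δ + 1` is the maximal cardinality of a face of `K`. -/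
def rank (K : SComplex V) : ℕ := K.faces.sup Finset.card

/-- `F` is a facet (maximal face) of `K`. -/
def IsFacet (K : SComplex V) (F : Finset V) : Prop :=
  F ∈ K.faces ∧ ∀ G ∈ K.faces, F ⊆ G → F = G

/-- `K` is pure: all facets have the maximal cardinality `K.rank`. -/
def Pure (K : SComplex V) : Prop := ∀ F : Finset V, K.IsFacet F → F.card = K.rank

/-- The link `lk_K(T) = {G ∈ K | T ∪ G ∈ K, T ∩ G = ∅}`. -/
def link (K : SComplex V) (T : Finset V) : SComplex V where
  faces := K.faces.filter fun G => Disjoint T G ∧ T ∪ G ∈ K.faces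
  down_closed := by
    intro s t hs hts
    simp only [Finset.mem_filter] at hs ⊢
    exact ⟨K.down_closed hs.1 hts, hs.2.1.mono_right hts,
      K.down_closed hs.2.2 (Finset.union_subset_union_right hts)⟩

/-- The anti-star `ast_K(T) = {G ∈ K | T ∩ G = ∅}`. -/
def antistar (K : SComplex V) (T : Finset V) : SComplex V where
  faces := K.faces.filter fun G => Disjoint T G
  down_closed := by
    intro s t hs hts
    simp only [Finset.mem_filter] at hs ⊢
    exact ⟨K.down_closed hs.1 hts, hs.2.mono_right hts⟩

/-- The induced subcomplex of `K` on a set `W` of vertices. -/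
def restrict (K : SComplex V) (W : Finset V) : SComplex V where
  faces := K.faces.filter fun G => G ⊆ W
  down_closed := by
    intro s t hs hts
    simp only [Finset.mem_filter] at hs ⊢
    exact ⟨K.down_closed hs.1 hts, hts.trans hs.2⟩

/-- The subcomplex of faces of cardinality at most `m`; as cardinality = dimension + 1, this is
the `(m-1)`-skeleton `Δ^{(m-1)}`. -/
def skelCard (K : SComplex V) (m : ℕ) : SComplex V where
  faces := K.faces.filter fun G => G.card ≤ m
  down_closed := by
    intro s t hs hts
    simp only [Finset.mem_filter] at hs ⊢
    exact ⟨K.down_closed hs.1 hts, le_trans (Finset.card_le_card hts) hs.2⟩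

/-- `K.trunc j` is `[Δ]_{>j}`, the order complex of the poset of faces of `K` of cardinality
(equivalently, of height in the face poset) `> j`: its faces are the chains of such faces.
For `j = 0` this is the barycentric subdivision of `K`. -/
def trunc (K : SComplex V) (j : ℕ) : SComplex (Finset V) where
  faces := K.faces.powerset.filter fun C =>
    (∀ s ∈ C, j < s.card) ∧ ∀ s ∈ C, ∀ t ∈ C, s ⊆ t ∨ t ⊆ s
  down_closed := by
    intro s t hs hts
    simp only [Finset.mem_powerset, Finset.mem_filter] at hs ⊢
    exact ⟨hts.trans hs.1, fun a ha => hs.2.1 a (hts ha),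
      fun a ha b hb => hs.2.2 a (hts ha) b (hts hb)⟩

/-- `Δ_A`: the complex obtained from `K` by deleting all faces containing a member of `A`. -/
def deleteAbove (K : SComplex V) (A : Finset (Finset V)) : SComplex V where
  faces := K.faces.filter fun s => ∀ τ ∈ A, ¬ τ ⊆ s
  down_closed := by
    intro s t hs hts
    simp only [Finset.mem_filter] at hs ⊢
    exact ⟨K.down_closed hs.1 hts, fun τ hτ hsub => hs.2 τ hτ (hsub.trans hts)⟩

/-- The number of faces of `K` of cardinality `i`, i.e. the face number `f_{i-1}(K)`. -/
def faceCount (K : SComplex V) (i : ℕ) : ℕ := (K.faces.filter fun s => s.card = i).card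

/-- The Euler characteristic `χ(K) = Σ_{i ≥ 0} (-1)^i f_i(K)`. -/
def eulerChar (K : SComplex V) : ℤ :=
  ∑ s ∈ K.faces.filter (fun s => s ≠ ∅), (-1 : ℤ) ^ (s.card - 1)

/-- The reduced Euler characteristic `χ̃(K) = χ(K) - 1`. -/
def reducedEulerChar (K : SComplex V) : ℤ := eulerChar K - 1

end SComplex

/-! ### Simplicial homology with coefficients in a field `k` -/

/-- An arbitrary linear order on a finite type. -/
noncomputable def arbOrder (V : Type) [Fintype V] : LinearOrder V :=
  LinearOrder.lift' (Fintype.equivFin V) (Equiv.injective _)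

namespace SComplex

variable {V : Type} [DecidableEq V]

/-- The faces of `K` of cardinality `n`, as a type. -/
def Faces (K : SComplex V) (n : ℕ) : Type :=
  {s : Finset V // s ∈ K.faces ∧ s.card = n}

/-- The space of reduced simplicial `n`-chains of `K`: formal `k`-linear combinations of the
faces of cardinality `n` (such a face has dimension `n - 1`; the empty face sits in degree `0`,
which produces *reduced* homology). -/
abbrev ChainsOf (k : Type) [Field k] (K : SComplex V) (n : ℕ) : Type := Faces K n →₀ k

variable (k : Type) [Field k] [Fintype V]

/-- The simplicial boundary map, with signs determined by an arbitrary but fixed linear order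
on the vertices. -/
noncomputable def bd (K : SComplex V) (n : ℕ) :
    ChainsOf k K n →ₗ[k] ChainsOf k K (n - 1) :=
  letI : LinearOrder V := arbOrder V
  Finsupp.lsum k fun s : Faces K n =>
    LinearMap.toSpanSingleton k (ChainsOf k K (n - 1))
      (∑ x ∈ s.1.attach,
        ((-1 : k) ^ (s.1.filter (fun y => y < x.1)).card) •
          Finsupp.single
            (⟨s.1.erase x.1,
              K.down_closed s.2.1 (Finset.erase_subset _ _),
              by rw [Finset.card_erase_of_mem x.2, s.2.2]⟩ : Faces K (n - 1))
            (1 : k))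

/-- `HVanish k K i` says that the reduced simplicial homology `H̃_{i-1}(K; k)` vanishes.
Note the indexing convention: the index `i` is the *cardinality* of the relevant faces, so this
is reduced homology in topological degree `i - 1`; e.g. `HVanish k K 1` says `H̃₀(K; k) = 0`
(`K` is connected and nonempty) and `HVanish k K 0` says `H̃₋₁(K; k) = 0` (`K` has a face).
Since the cycles in degree `i - 1` are `ker ∂ᵢ` and the boundaries are `im ∂ᵢ₊₁`, and the
boundaries are always contained in the cycles, vanishing of homology says exactly that every
cycle is a boundary. -/
def HVanish (K : SComplex V) (i : ℕ) : Prop :=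
  LinearMap.ker (bd k K i) ≤ LinearMap.range (bd k K (i + 1))

/-- `redHomologyRank k K i` is the dimension `dim_k H̃_{i-1}(K; k)` of the reduced simplicial
homology of `K` in topological degree `i - 1` (cardinality index `i`), namely the dimension of
the cycles `ker ∂ᵢ` modulo the boundaries `im ∂ᵢ₊₁`. -/
noncomputable def redHomologyRank (K : SComplex V) (i : ℕ) : ℕ :=
  Module.finrank k ↥(LinearMap.ker (bd k K i)) -
    Module.finrank k ↥(LinearMap.range (bd k K (i + 1)) ⊓ LinearMap.ker (bd k K i))

end SComplex

/-! ### Depth, Serre conditions, and Stanley–Reisner rings -/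

/-- The length of a longest regular sequence on `R` contained in the ideal `I`
(the `I`-depth of `R`). -/
noncomputable def depthIn (R : Type) [CommRing R] (I : Ideal R) : ℕ :=
  sSup {n : ℕ | ∃ rs : List R, rs.length = n ∧ (∀ r ∈ rs, r ∈ I) ∧
    RingTheory.Sequence.IsRegular R rs}

/-- Serre's condition `(S_ℓ)` for a commutative ring:
`depth R_p ≥ min {ℓ, dim R_p}` for every prime `p`. -/
def SerreCondS (ℓ : ℕ) (R : Type) [CommRing R] : Prop :=
  ∀ (p : Ideal R) (hp : p.IsPrime),
    haveI := hp
    min ((ℓ : ℕ∞) : WithBot ℕ∞) (ringKrullDim (Localization.AtPrime p)) ≤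
      ((depthIn (Localization.AtPrime p)
        (IsLocalRing.maximalIdeal (Localization.AtPrime p)) : ℕ∞) : WithBot ℕ∞)

namespace SComplex

variable {V : Type} [DecidableEq V] (k : Type) [Field k]

/-- The Stanley–Reisner ideal of `K`: generated by the squarefree monomials supported on
non-faces. -/
noncomputable def srIdeal (K : SComplex V) : Ideal (MvPolynomial V k) :=
  Ideal.span ((fun s : Finset V => ∏ v ∈ s, MvPolynomial.X v) '' {s : Finset V | s ∉ K.faces})

/-- The Stanley–Reisner ring `k[Δ]`. -/
noncomputable abbrev SRRing (K : SComplex V) : Type := MvPolynomial V k ⧸ srIdeal k K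

/-- `depth k[Δ]`: the depth of the Stanley–Reisner ring with respect to its irrelevant
(graded maximal) ideal. -/
noncomputable def srDepth (K : SComplex V) : ℕ :=
  depthIn (SRRing k K)
    (Ideal.span (Set.range fun v : V => Ideal.Quotient.mk (srIdeal k K) (MvPolynomial.X v)))

/-- `k[Δ]` satisfies Serre's condition `(S_ℓ)`. -/
def SerreS (ℓ : ℕ) (K : SComplex V) : Prop := SerreCondS ℓ (SRRing k K)

end SComplex

/-! ### Order complexes of finite posets -/

/-- The order complex `O(P)` of a finite poset: its faces are the chains of `P`. -/
def orderComplex (P : Type) [DecidableEq P] [Fintype P] [PartialOrder P]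
    [∀ a b : P, Decidable (a ≤ b)] : SComplex P where
  faces := Finset.univ.filter fun C : Finset P => ∀ a ∈ C, ∀ b ∈ C, a ≤ b ∨ b ≤ a
  down_closed := by
    intro s t hs hts
    simp only [Finset.mem_filter, Finset.mem_univ, true_and] at hs ⊢
    exact fun a ha b hb => hs a (hts ha) b (hts hb)

/-- The height of an element of a finite poset: the maximal cardinality of a chain with top
element `p` (so minimal elements have height `1`). -/
def pheight {P : Type} [DecidableEq P] [Fintype P] [PartialOrder P]
    [∀ a b : P, Decidable (a ≤ b)] (p : P) : ℕ :=
  Finset.sup (Finset.univ.filter fun C : Finset P =>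
    p ∈ C ∧ (∀ a ∈ C, a ≤ p) ∧ ∀ a ∈ C, ∀ b ∈ C, a ≤ b ∨ b ≤ a) Finset.card

/-- The height `ht P` of a finite poset: the maximal cardinality of a chain. -/
def pheightMax (P : Type) [DecidableEq P] [Fintype P] [PartialOrder P]
    [∀ a b : P, Decidable (a ≤ b)] : ℕ :=
  Finset.univ.sup (pheight (P := P))

/-- `O(P_{>j})`: the full subcomplex of the order complex on the elements of height `> j`. -/
def ocAbove (P : Type) [DecidableEq P] [Fintype P] [PartialOrder P]
    [∀ a b : P, Decidable (a ≤ b)] (j : ℕ) : SComplex P :=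
  (orderComplex P).restrict (Finset.univ.filter fun p => j < pheight p)

/-- The face poset `F(Δ)` of a simplicial complex: the nonempty faces, ordered by inclusion. -/
abbrev SComplex.FacePoset {V : Type} [DecidableEq V] (K : SComplex V) : Type :=
  {s : Finset V // s ∈ K.faces ∧ s ≠ ∅}

instance {V : Type} [DecidableEq V] (K : SComplex V) :
    ∀ a b : K.FacePoset, Decidable (a ≤ b) := fun a b =>
  decidable_of_iff (a.1 ≤ b.1) Subtype.coe_le_coe

namespace SComplex

section Exterior

variable (k : Type) [Field k] {V : Type}

/-- The exterior algebra on the free module with basis `V`. -/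
abbrev Ext (V : Type) : Type := ExteriorAlgebra k (V →₀ k)

/-- The generator of the exterior algebra attached to a vertex. -/
noncomputable def extGen (v : V) : Ext k V := ExteriorAlgebra.ι k (Finsupp.single v 1)

/-- The product of the generators attached to a list of vertices. -/
noncomputable def extProd (l : List V) : Ext k V := (l.map (extGen k)).prod

/-- The simplicial boundary, as contraction with the sum of coordinates. -/
noncomputable def extBd : Ext k V →ₗ[k] Ext k V :=
  CliffordAlgebra.contractLeft (Finsupp.linearCombination k fun _ : V => (1 : k))

/-- Contraction with the coordinate of a vertex. -/
noncomputable def extDel (v : V) : Ext k V →ₗ[k] Ext k V :=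
  CliffordAlgebra.contractLeft (Finsupp.lapply v)

variable {k}

@[simp] lemma extProd_nil : extProd k ([] : List V) = 1 := rfl

@[simp] lemma extProd_cons (v : V) (l : List V) :
    extProd k (v :: l) = extGen k v * extProd k l := by simp [extProd]

lemma extBd_gen_mul (v : V) (x : Ext k V) :
    extBd k (extGen k v * x) = x - extGen k v * extBd k x := by
  simp [extBd, extGen, ExteriorAlgebra.ι, CliffordAlgebra.contractLeft_ι_mul]

lemma extBd_one : extBd k (1 : Ext k V) = 0 :=
  CliffordAlgebra.contractLeft_one (Q := 0) _

lemma extDel_one (v : V) : extDel k v (1 : Ext k V) = 0 :=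
  CliffordAlgebra.contractLeft_one (Q := 0) _

lemma extDel_gen_mul_self (v : V) (x : Ext k V) :
    extDel k v (extGen k v * x) = x - extGen k v * extDel k v x := by
  simp [extDel, extGen, ExteriorAlgebra.ι, CliffordAlgebra.contractLeft_ι_mul]

lemma extDel_gen_mul_of_ne {u v : V} (h : u ≠ v) (x : Ext k V) :
    extDel k v (extGen k u * x) = - (extGen k u * extDel k v x) := by
  simp [extDel, extGen, ExteriorAlgebra.ι, CliffordAlgebra.contractLeft_ι_mul,
    Finsupp.single_eq_of_ne h.symm]

lemma extBd_extDel (v : V) (x : Ext k V) :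
    extBd k (extDel k v x) = - extDel k v (extBd k x) :=
  CliffordAlgebra.contractLeft_comm _ _ _

lemma extGen_mul_self (v : V) (x : Ext k V) : extGen k v * (extGen k v * x) = 0 := by
  rw [← mul_assoc, extGen, ExteriorAlgebra.ι_sq_zero, zero_mul]

lemma extGen_mul_swap (u v : V) (x : Ext k V) :
    extGen k u * (extGen k v * x) = - (extGen k v * (extGen k u * x)) := by
  rw [eq_neg_iff_add_eq_zero, ← mul_assoc, ← mul_assoc, ← add_mul, extGen, extGen,
    ExteriorAlgebra.ι_add_mul_swap, zero_mul]

lemma extGen_mul_extProd_of_mem {v : V} {l : List V} (h : v ∈ l) :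
    extGen k v * extProd k l = 0 := by
  induction l with
  | nil => simp at h
  | cons u l ih =>
    rw [extProd_cons]
    rcases List.mem_cons.1 h with rfl | h
    · exact extGen_mul_self _ _
    · rw [extGen_mul_swap, ih h, mul_zero, neg_zero]

lemma extProd_eq_zero_of_not_nodup {l : List V} (h : ¬ l.Nodup) : extProd k l = 0 := by
  induction l with
  | nil => simp at h
  | cons u l ih =>
    rw [extProd_cons]
    by_cases hu : u ∈ l
    · exact extGen_mul_extProd_of_mem hu
    · rw [ih (fun hl => h (List.nodup_cons.2 ⟨hu, hl⟩)), mul_zero]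

lemma extDel_extProd_of_notMem {v : V} {l : List V} (h : v ∉ l) :
    extDel k v (extProd k l) = 0 := by
  induction l with
  | nil => simpa using extDel_one v
  | cons u l ih =>
    rw [List.mem_cons, not_or] at h
    rw [extProd_cons, extDel_gen_mul_of_ne (Ne.symm h.1), ih h.2, mul_zero, neg_zero]

lemma extProd_perm {l l' : List V} (h : l.Perm l') :
    extProd k l = extProd k l' ∨ extProd k l = - extProd k l' := by
  induction h with
  | nil => simp
  | cons x _ ih =>
    rcases ih with ih | ih <;> simp [ih]
  | swap x y l =>
    right
    simpa using extGen_mul_swap y x (extProd k l)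
  | trans _ _ ih₁ ih₂ =>
    rcases ih₁ with h₁ | h₁ <;> rcases ih₂ with h₂ | h₂ <;> simp [h₁, h₂]

variable [DecidableEq V]

variable (k) in
/-- The chains of degree `n` supported on a family `P` of finite sets. -/
noncomputable def chainSpan (P : Set (Finset V)) (n : ℕ) : Submodule k (Ext k V) :=
  Submodule.span k {x | ∃ l : List V, l.Nodup ∧ l.length = n ∧ l.toFinset ∈ P ∧ x = extProd k l}

variable (k) in
/-- Vanishing of reduced homology of a family of finite sets, in the degree given by the
cardinality `n`. -/
def Acyclic (P : Set (Finset V)) (n : ℕ) : Prop :=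
  ∀ z ∈ chainSpan k P n, extBd k z = 0 → ∃ w ∈ chainSpan k P (n + 1), extBd k w = z

lemma extProd_mem_chainSpan {P : Set (Finset V)} {n : ℕ} {l : List V} (hl : l.length = n)
    (hP : l.toFinset ∈ P) : extProd k l ∈ chainSpan k P n := by
  by_cases h : l.Nodup
  · exact Submodule.subset_span ⟨l, h, hl, hP, rfl⟩
  · rw [extProd_eq_zero_of_not_nodup h]
    exact zero_mem _

lemma chainSpan_mono {P Q : Set (Finset V)} (h : P ⊆ Q) (n : ℕ) :
    chainSpan k P n ≤ chainSpan k Q n :=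
  Submodule.span_mono fun _ ⟨l, h₁, h₂, h₃, h₄⟩ => ⟨l, h₁, h₂, h h₃, h₄⟩

lemma chainSpan_le {P : Set (Finset V)} {n : ℕ} {S : Submodule k (Ext k V)}
    (h : ∀ l : List V, l.Nodup → l.length = n → l.toFinset ∈ P → extProd k l ∈ S) :
    chainSpan k P n ≤ S :=
  Submodule.span_le.2 fun _ ⟨l, h₁, h₂, h₃, h₄⟩ => h₄ ▸ h l h₁ h₂ h₃

lemma gen_mul_mem_chainSpan {P Q : Set (Finset V)} {n : ℕ} {v : V}
    (h : ∀ s ∈ P, insert v s ∈ Q) {x : Ext k V} (hx : x ∈ chainSpan k P n) :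
    extGen k v * x ∈ chainSpan k Q (n + 1) := by
  have : chainSpan k P n ≤ (chainSpan k Q (n + 1)).comap (LinearMap.mulLeft k (extGen k v)) := by
    refine chainSpan_le fun l _ h₂ h₃ => ?_
    rw [Submodule.mem_comap, LinearMap.mulLeft_apply, ← extProd_cons]
    exact extProd_mem_chainSpan (by simp [h₂]) (by simpa using h _ h₃)
  exact this hx

lemma exists_extProd_eq {v : V} {l : List V} (h : v ∈ l) :
    ∃ c : k, extProd k l = c • (extGen k v * extProd k (l.erase v)) := by
  rcases extProd_perm (k := k) (List.perm_cons_erase h) with h | h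
  · exact ⟨1, by simp [h]⟩
  · exact ⟨-1, by simp [h]⟩

/-- Contraction with a vertex maps chains to chains of the link of that vertex. -/
lemma extDel_mem_chainSpan {P Q : Set (Finset V)} {n : ℕ} {v : V}
    (h : ∀ s, v ∉ s → insert v s ∈ P → s ∈ Q) {x : Ext k V} (hx : x ∈ chainSpan k P (n + 1)) :
    extDel k v x ∈ chainSpan k Q n := by
  have : chainSpan k P (n + 1) ≤ (chainSpan k Q n).comap (extDel k v) := by
    refine chainSpan_le fun l h₁ h₂ h₃ => ?_
    rw [Submodule.mem_comap]
    by_cases hv : v ∈ l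
    · obtain ⟨c, hc⟩ := exists_extProd_eq (k := k) hv
      have hn : v ∉ l.erase v := h₁.not_mem_erase
      rw [hc, map_smul, extDel_gen_mul_self, extDel_extProd_of_notMem hn, mul_zero, sub_zero]
      refine Submodule.smul_mem _ _ (extProd_mem_chainSpan ?_ (h _ (by simpa using hn) ?_))
      · rw [List.length_erase_of_mem hv, h₂, Nat.add_sub_cancel]
      · rwa [← List.toFinset_cons, ← List.toFinset_eq_of_perm _ _ (List.perm_cons_erase hv)]
    · rw [extDel_extProd_of_notMem hv]
      exact zero_mem _
  exact this hx

lemma extDel_eq_zero {P : Set (Finset V)} {n : ℕ} {v : V} (h : ∀ s ∈ P, v ∉ s) {x : Ext k V}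
    (hx : x ∈ chainSpan k P n) : extDel k v x = 0 := by
  have : chainSpan k P n ≤ LinearMap.ker (extDel k v) :=
    chainSpan_le fun l _ _ h₃ => extDel_extProd_of_notMem (by simpa using h _ h₃)
  exact this hx

/-- Subtracting the part involving a vertex leaves a chain of the deletion of that vertex. -/
lemma sub_gen_mul_extDel_mem_chainSpan {P Q : Set (Finset V)} {n : ℕ} {v : V}
    (h : ∀ s ∈ P, v ∉ s → s ∈ Q) {x : Ext k V} (hx : x ∈ chainSpan k P n) :
    x - extGen k v * extDel k v x ∈ chainSpan k Q n := by
  have : chainSpan k P n ≤ (chainSpan k Q n).comap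
      (LinearMap.id - (LinearMap.mulLeft k (extGen k v)).comp (extDel k v)) := by
    refine chainSpan_le fun l h₁ h₂ h₃ => ?_
    simp only [Submodule.mem_comap, LinearMap.sub_apply, LinearMap.id_apply,
      LinearMap.comp_apply, LinearMap.mulLeft_apply]
    by_cases hv : v ∈ l
    · obtain ⟨c, hc⟩ := exists_extProd_eq (k := k) hv
      have hn : v ∉ l.erase v := h₁.not_mem_erase
      rw [hc, map_smul, extDel_gen_mul_self, extDel_extProd_of_notMem hn, mul_zero, sub_zero,
        mul_smul_comm, sub_self]
      exact zero_mem _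
    · rw [extDel_extProd_of_notMem hv, mul_zero, sub_zero]
      exact extProd_mem_chainSpan h₂ (h _ h₃ (by simpa using hv))
  exact this hx

/-- A Mayer–Vietoris step: deleting a vertex. -/
lemma Acyclic.deletion {P Q L : Set (Finset V)} {n : ℕ} (v : V)
    (hQ : ∀ s, s ∈ Q ↔ s ∈ P ∧ v ∉ s) (hL : ∀ s, s ∈ L ↔ v ∉ s ∧ insert v s ∈ P)
    (hP : ∀ s ∈ P, ∀ t ⊆ s, t ∈ P) (h₁ : Acyclic k P n) (h₂ : Acyclic k L n) :
    Acyclic k Q n := by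
  intro z hz hbz
  obtain ⟨w, hw, rfl⟩ := h₁ z (chainSpan_mono (fun s hs => ((hQ s).1 hs).1) n hz) hbz
  have hdz := extDel_eq_zero (v := v) (fun s hs => ((hQ s).1 hs).2) hz
  obtain ⟨u, hu, hbu⟩ := h₂ (extDel k v w)
    (extDel_mem_chainSpan (fun s h h' => (hL s).2 ⟨h, h'⟩) hw)
    (by rw [extBd_extDel, hdz, neg_zero])
  refine ⟨w - extGen k v * extDel k v w + u, add_mem ?_ ?_, ?_⟩
  · exact sub_gen_mul_extDel_mem_chainSpan (fun s h h' => (hQ s).2 ⟨h, h'⟩) hw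
  · refine chainSpan_mono (fun s hs => ?_) _ hu
    obtain ⟨h, h'⟩ := (hL s).1 hs
    exact (hQ s).2 ⟨hP _ h' _ (subset_insert _ _), h⟩
  · rw [map_add, map_sub, extBd_gen_mul, hbu, extBd_extDel, hdz]
    simp

/-- A family of sets that is a cone with apex `v` is acyclic. -/
lemma Acyclic.of_cone {P : Set (Finset V)} (v : V) (h : ∀ s ∈ P, insert v s ∈ P) (n : ℕ) :
    Acyclic k P n := by
  intro z hz hbz
  refine ⟨extGen k v * z, gen_mul_mem_chainSpan h hz, ?_⟩
  rw [extBd_gen_mul, hbz, mul_zero, sub_zero]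

lemma Acyclic.of_isEmpty {P : Set (Finset V)} (h : ∀ s, s ∉ P) (n : ℕ) : Acyclic k P n := by
  intro z hz _
  have : chainSpan k P n ≤ ⊥ := chainSpan_le fun l _ _ h₃ => (h _ h₃).elim
  exact ⟨0, zero_mem _, by rw [map_zero, (Submodule.mem_bot k).1 (this hz)]⟩

/-- The map of exterior algebras induced by a map of vertices. -/
noncomputable def extMap {W : Type} (f : V → W) : Ext k V →ₐ[k] Ext k W :=
  ExteriorAlgebra.map (Finsupp.lmapDomain k k f)

omit [DecidableEq V] in
lemma extMap_gen {W : Type} (f : V → W) (v : V) : extMap f (extGen k v) = extGen k (f v) := by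
  simp [extMap, extGen]

omit [DecidableEq V] in
lemma extMap_extProd {W : Type} (f : V → W) (l : List V) :
    extMap f (extProd k l) = extProd k (l.map f) := by
  induction l with
  | nil => simp
  | cons v l ih => simp [ih, extMap_gen]

lemma extBd_extMap {W : Type} (f : V → W) {P : Set (Finset V)} {n : ℕ} {x : Ext k V}
    (hx : x ∈ chainSpan k P n) : extBd k (extMap f x) = extMap f (extBd k x) := by
  have : chainSpan k P n ≤ LinearMap.eqLocus ((extBd k).comp (extMap f).toLinearMap)
      ((extMap f).toLinearMap.comp (extBd k)) := by
    refine chainSpan_le fun l _ _ _ => ?_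
    simp only [LinearMap.mem_eqLocus, LinearMap.comp_apply, AlgHom.toLinearMap_apply]
    clear * -
    induction l with
    | nil => simp [extBd_one]
    | cons v l ih => simp [extBd_gen_mul, extMap_gen, ih]
  exact this hx

end Exterior

section Signs

variable {V : Type} [Fintype V]

/-- The sign of a vertex in a finite set, for the fixed order on the vertices. -/
noncomputable def vsgn (v : V) (s : Finset V) : ℤ :=
  letI : LinearOrder V := arbOrder V
  (-1) ^ (s.filter (fun y => y < v)).card

lemma vsgn_mul_self (v : V) (s : Finset V) : vsgn v s * vsgn v s = 1 := by
  rw [vsgn, ← mul_pow]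
  simp

variable [DecidableEq V]

lemma vsgn_insert_of_lt {u v : V} {s : Finset V} (hu : u ∉ s)
    (h : letI : LinearOrder V := arbOrder V; u < v) : vsgn v (insert u s) = - vsgn v s := by
  let _ : LinearOrder V := arbOrder V
  simp only [vsgn]
  rw [filter_insert, if_pos h, card_insert_of_notMem (by simp [hu]), pow_succ, mul_neg_one]

lemma vsgn_insert_of_not_lt {u v : V} {s : Finset V}
    (h : letI : LinearOrder V := arbOrder V; ¬ u < v) : vsgn v (insert u s) = vsgn v s := by
  let _ : LinearOrder V := arbOrder V
  simp only [vsgn]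
  rw [filter_insert, if_neg h]

lemma vsgn_erase_of_lt {u v : V} {s : Finset V} (hu : u ∈ s)
    (h : letI : LinearOrder V := arbOrder V; u < v) : vsgn v (s.erase u) = - vsgn v s := by
  nth_rw 2 [← insert_erase hu]
  rw [vsgn_insert_of_lt (notMem_erase _ _) h, neg_neg]

lemma vsgn_erase_of_not_lt {u v : V} {s : Finset V}
    (h : letI : LinearOrder V := arbOrder V; ¬ u < v) : vsgn v (s.erase u) = vsgn v s := by
  by_cases hu : u ∈ s
  · nth_rw 2 [← insert_erase hu]
    rw [vsgn_insert_of_not_lt h]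
  · rw [erase_eq_of_notMem hu]

lemma vsgn_insert_self (v : V) (s : Finset V) : vsgn v (insert v s) = vsgn v s :=
  vsgn_insert_of_not_lt (by simp)

lemma vsgn_mul_vsgn_erase {u v : V} {s : Finset V} (hu : u ∈ s) (hv : v ∈ s) (h : u ≠ v) :
    vsgn v s * vsgn u (s.erase v) = - (vsgn u s * vsgn v (s.erase u)) := by
  let _ : LinearOrder V := arbOrder V
  rcases lt_or_gt_of_ne h with h | h
  · rw [vsgn_erase_of_not_lt (not_lt_of_gt h), vsgn_erase_of_lt hu h]
    ring
  · rw [vsgn_erase_of_lt hv h, vsgn_erase_of_not_lt (not_lt_of_gt h)]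
    ring

/-- The cancellation behind `∂ ∘ ∂ = 0`. -/
lemma sum_vsgn_smul_sum_vsgn_smul {M : Type} [AddCommGroup M] (s : Finset V)
    (g : V → V → M) (hg : ∀ u v, g u v = g v u) :
    ∑ v ∈ s, vsgn v s • ∑ u ∈ s.erase v, vsgn u (s.erase v) • g v u = 0 := by
  simp_rw [smul_sum, smul_smul]
  rw [sum_sigma']
  refine sum_involution (fun p _ => ⟨p.2, p.1⟩) ?_ ?_ ?_ ?_
  · rintro ⟨v, u⟩ hp
    simp only [mem_sigma, mem_erase] at hp
    simp only
    rw [vsgn_mul_vsgn_erase hp.2.2 hp.1 hp.2.1, hg v u, neg_smul, neg_add_cancel]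
  · rintro ⟨v, u⟩ hp _ h
    simp only [mem_sigma, mem_erase] at hp
    simp only [Sigma.mk.injEq] at h
    exact hp.2.1 h.1
  · rintro ⟨v, u⟩ hp
    simp only [mem_sigma, mem_erase] at hp ⊢
    exact ⟨hp.2.2, Ne.symm hp.2.1, hp.1⟩
  · rintro ⟨v, u⟩ hp
    rfl

variable (k : Type) [Field k]

/-- The product of the generators attached to a finite set, in increasing order. -/
noncomputable def ordProd (s : Finset V) : Ext k V :=
  letI : LinearOrder V := arbOrder V
  extProd k (s.sort (· ≤ ·))

omit [DecidableEq V] in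
lemma ordProd_empty : ordProd k (∅ : Finset V) = 1 := by
  simp [ordProd]

lemma ordProd_insert_of_lt {m : V} {s : Finset V}
    (h : letI : LinearOrder V := arbOrder V; ∀ x ∈ s, m < x) :
    ordProd k (insert m s) = extGen k m * ordProd k s := by
  let _ : LinearOrder V := arbOrder V
  rw [ordProd, ordProd, ← extProd_cons]
  have hm : m ∉ s := fun hm => lt_irrefl _ (h m hm)
  congr 1
  rw [← Finset.sort_insert (r := (· ≤ ·)) (fun b hb => (h b hb).le) hm]

lemma extBd_ordProd (s : Finset V) :
    extBd k (ordProd k s) = ∑ x ∈ s, vsgn x s • ordProd k (s.erase x) := by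
  let _ : LinearOrder V := arbOrder V
  revert s
  refine fun s => Finset.induction_on_min s ?_ ?_
  · simp [ordProd_empty, extBd_one]
  · intro m s h ih
    have hm : m ∉ s := fun hm => lt_irrefl _ (h m hm)
    have e : ∀ d : DecidableEq V,
        @insert V (Finset V) (@Finset.instInsert V d) m s = insert m s := fun d => by
      ext
      simp
    rw [e, ordProd_insert_of_lt k h, extBd_gen_mul, ih, sum_insert hm, erase_insert hm,
      vsgn_insert_self, sub_eq_add_neg, mul_sum, ← sum_neg_distrib]
    congr 1
    · have : s.filter (fun y => y < m) = ∅ :=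
        filter_eq_empty_iff.2 fun x hx => not_lt_of_gt (h x hx)
      rw [vsgn, this]
      simp
    · refine sum_congr rfl fun x hx => ?_
      have hxm : m ≠ x := fun e => hm (e ▸ hx)
      rw [erase_insert_of_ne hxm, vsgn_insert_of_lt hm (h x hx),
        ordProd_insert_of_lt k (fun y hy => h y (mem_of_mem_erase hy)), mul_smul_comm, neg_smul]

end Signs

section Independence

variable (k : Type) [Field k] {V : Type}

/-- The coefficient of a list of vertices, as an iterated contraction. -/
noncomputable def extCoeff : List V → Ext k V →ₗ[k] k
  | [] => ExteriorAlgebra.algebraMapInv.toLinearMap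
  | v :: l => (extCoeff l).comp (extDel k v)

variable {k} [DecidableEq V]

lemma extCoeff_extProd_of_not_perm {l l' : List V} (hl' : l'.Nodup) (h : ¬ l.Perm l') :
    extCoeff k l (extProd k l') = 0 := by
  induction l generalizing l' with
  | nil =>
    cases l' with
    | nil => simp at h
    | cons v l' => simp [extCoeff, extGen, ExteriorAlgebra.algebraMapInv]
  | cons v l ih =>
    rw [extCoeff, LinearMap.comp_apply]
    by_cases hv : v ∈ l'
    · obtain ⟨c, hc⟩ := exists_extProd_eq (k := k) hv
      rw [hc, map_smul, extDel_gen_mul_self, extDel_extProd_of_notMem hl'.not_mem_erase,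
        mul_zero, sub_zero, map_smul, ih (hl'.erase v), smul_zero]
      exact fun hp => h ((hp.cons v).trans (List.perm_cons_erase hv).symm)
    · rw [extDel_extProd_of_notMem hv, map_zero]

omit [DecidableEq V] in
lemma extCoeff_extProd_self {l : List V} (hl : l.Nodup) : extCoeff k l (extProd k l) = 1 := by
  induction l with
  | nil => simp [extCoeff]
  | cons v l ih =>
    rw [List.nodup_cons] at hl
    rw [extCoeff, LinearMap.comp_apply, extProd_cons, extDel_gen_mul_self,
      extDel_extProd_of_notMem hl.1, mul_zero, sub_zero, ih hl.2]

variable [Fintype V]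

variable (k V) in
lemma linearIndependent_ordProd : LinearIndependent k (ordProd k : Finset V → Ext k V) := by
  let _ : LinearOrder V := arbOrder V
  rw [linearIndependent_iff']
  intro S g hg t ht
  have h := congrArg (extCoeff k (t.sort (· ≤ ·))) hg
  rw [map_sum, map_zero, sum_eq_single t] at h
  · simpa [ordProd, extCoeff_extProd_self (sort_nodup t (· ≤ ·))] using h
  · intro s _ hst
    rw [map_smul, ordProd, extCoeff_extProd_of_not_perm (sort_nodup s (· ≤ ·)), smul_zero]
    intro hp
    apply hst
    ext x
    simpa using (hp.mem_iff (a := x)).symm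
  · exact fun h => (h ht).elim

lemma ordProd_toFinset (l : List V) (hl : l.Nodup) :
    extProd k l = ordProd k l.toFinset ∨ extProd k l = - ordProd k l.toFinset := by
  let _ : LinearOrder V := arbOrder V
  refine extProd_perm ?_
  refine (List.perm_ext_iff_of_nodup hl (sort_nodup _ _)).2 fun a => ?_
  simp

lemma ordProd_mem_chainSpan {P : Set (Finset V)} {s : Finset V} (hs : s ∈ P) :
    ordProd k s ∈ chainSpan k P s.card := by
  let _ : LinearOrder V := arbOrder V
  refine extProd_mem_chainSpan (by simp) ?_
  convert hs
  ext
  simp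

omit [DecidableEq V] in
lemma extGen_mul_ordProd_of_mem {v : V} {s : Finset V} (h : v ∈ s) :
    extGen k v * ordProd k s = 0 := by
  let _ : LinearOrder V := arbOrder V
  exact extGen_mul_extProd_of_mem (by simpa using h)

omit [DecidableEq V] in
lemma extGen_mul_extBd_ordProd {v : V} {s : Finset V} (h : v ∈ s) :
    extGen k v * extBd k (ordProd k s) = ordProd k s := by
  have := extBd_gen_mul v (ordProd k s)
  rw [extGen_mul_ordProd_of_mem h, map_zero] at this
  exact (sub_eq_zero.1 this.symm).symm

variable (k) in
/-- Simplicial chains as elements of the exterior algebra. -/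
noncomputable def toExt (K : SComplex V) (n : ℕ) : ChainsOf k K n →ₗ[k] Ext k V :=
  Finsupp.linearCombination k fun s : Faces K n => ordProd k s.1

lemma toExt_single (K : SComplex V) (n : ℕ) (s : Faces K n) :
    toExt k K n (Finsupp.single s 1) = ordProd k s.1 := by
  simp [toExt]

lemma toExt_injective (K : SComplex V) (n : ℕ) : Function.Injective (toExt k K n) :=
  (linearIndependent_ordProd k V).comp (fun s : Faces K n => s.1) Subtype.val_injective

lemma range_toExt (K : SComplex V) (n : ℕ) :
    LinearMap.range (toExt k K n) = chainSpan k (K.faces : Set (Finset V)) n := by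
  rw [toExt, Finsupp.range_linearCombination]
  apply le_antisymm
  · rw [Submodule.span_le]
    rintro _ ⟨⟨s, hs, rfl⟩, rfl⟩
    exact ordProd_mem_chainSpan (by simpa using hs)
  · refine chainSpan_le fun l h₁ h₂ h₃ => ?_
    have h : ordProd k l.toFinset ∈
        Submodule.span k (Set.range fun s : Faces K n => ordProd k s.1) :=
      Submodule.subset_span
        ⟨⟨l.toFinset, by simpa using h₃, by rw [List.toFinset_card_of_nodup h₁, h₂]⟩, rfl⟩
    rcases ordProd_toFinset (k := k) l h₁ with e | e <;> rw [e]
    · exact h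
    · exact neg_mem h

lemma toExt_bd (K : SComplex V) (n : ℕ) (c : ChainsOf k K n) :
    toExt k K (n - 1) (bd k K n c) = extBd k (toExt k K n c) := by
  suffices h : (toExt k K (n - 1)).comp (bd k K n) = (extBd k).comp (toExt k K n) from
    LinearMap.congr_fun h c
  refine Finsupp.lhom_ext' fun s => LinearMap.ext_ring ?_
  simp only [LinearMap.comp_apply, Finsupp.lsingle_apply]
  rw [toExt_single, extBd_ordProd, ← sum_attach s.1 (fun x => vsgn x s.1 • ordProd k (s.1.erase x))]
  simp only [bd, Finsupp.lsum_single, LinearMap.toSpanSingleton_apply, one_smul]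
  refine (map_sum (toExt k K (n - 1)) _ _).trans (sum_congr rfl fun x _ => ?_)
  refine (map_smul (toExt k K (n - 1)) _ _).trans ?_
  rw [vsgn, ← Int.cast_smul_eq_zsmul k]
  push_cast
  congr 1
  exact toExt_single K (n - 1) _

lemma hVanish_iff_acyclic (K : SComplex V) (i : ℕ) :
    HVanish k K i ↔ Acyclic k (K.faces : Set (Finset V)) i := by
  constructor
  · intro h z hz hbz
    rw [← range_toExt] at hz
    obtain ⟨c, rfl⟩ := hz
    rw [← toExt_bd, ← map_zero (toExt k K (i - 1))] at hbz
    obtain ⟨b, rfl⟩ := h (toExt_injective K _ hbz)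
    exact ⟨toExt k K (i + 1) b, by rw [← range_toExt]; exact ⟨b, rfl⟩, (toExt_bd K (i + 1) b).symm⟩
  · intro h c hc
    obtain ⟨w, hw, hbw⟩ := h (toExt k K i c) (by rw [← range_toExt]; exact ⟨c, rfl⟩)
      (by rw [← toExt_bd, LinearMap.mem_ker.1 hc, map_zero])
    rw [← range_toExt] at hw
    obtain ⟨b, rfl⟩ := hw
    exact ⟨b, toExt_injective K i ((toExt_bd K (i + 1) b).trans hbw)⟩

end Independence

section Links

variable {k : Type} [Field k] {V : Type} [DecidableEq V]

/-- The chains of faces strictly containing `F`. -/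
def upperChains (K : SComplex V) (F : Finset V) : Set (Finset (Finset V)) :=
  {C | C ⊆ K.faces ∧ (∀ s ∈ C, F ⊂ s) ∧ ∀ s ∈ C, ∀ t ∈ C, s ⊆ t ∨ t ⊆ s}

/-- The faces of the link of `F` disjoint from `N`. -/
def linkFam (K : SComplex V) (F N : Finset V) : Set (Finset V) :=
  {s | Disjoint s F ∧ Disjoint s N ∧ s ∪ F ∈ K.faces}

lemma mem_trunc_faces {K : SComplex V} {j : ℕ} {C : Finset (Finset V)} :
    C ∈ (K.trunc j).faces ↔
      C ⊆ K.faces ∧ (∀ s ∈ C, j < s.card) ∧ ∀ s ∈ C, ∀ t ∈ C, s ⊆ t ∨ t ⊆ s := by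
  simp [trunc]

lemma acyclic_upperChains_of_trunc {K : SComplex V} {F : Finset V} {i j : ℕ} (hF : F ∈ K.faces)
    (hj : F.card = j + 1)
    (h₁ : Acyclic k ((K.trunc (j + 1)).faces : Set (Finset (Finset V))) i)
    (h₂ : Acyclic k ((K.trunc j).faces : Set (Finset (Finset V))) (i + 1)) :
    Acyclic k (K.upperChains F) i := by
  intro z hz hbz
  have hU : K.upperChains F ⊆ ((K.trunc (j + 1)).faces : Set (Finset (Finset V))) := by
    rintro C ⟨hC₁, hC₂, hC₃⟩
    exact mem_trunc_faces.2 ⟨hC₁, fun s hs => hj ▸ card_lt_card (hC₂ s hs), hC₃⟩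
  obtain ⟨w, hw, hbw⟩ := h₁ z (chainSpan_mono hU i hz) hbz
  obtain ⟨u, hu, hbu⟩ := h₂ (extGen k F * z - w) (by
      refine sub_mem (gen_mul_mem_chainSpan ?_ hz) (chainSpan_mono ?_ _ hw)
      · rintro C ⟨hC₁, hC₂, hC₃⟩
        refine mem_trunc_faces.2 ⟨insert_subset hF hC₁, ?_, ?_⟩
        · intro s hs
          rcases mem_insert.1 hs with rfl | hs
          · omega
          · have := card_lt_card (hC₂ s hs)
            omega
        · intro s hs t ht
          rcases mem_insert.1 hs with e | hs <;> rcases mem_insert.1 ht with e' | ht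
          · exact Or.inl (e.trans e'.symm).subset
          · exact Or.inl (e ▸ (hC₂ t ht).subset)
          · exact Or.inr (e' ▸ (hC₂ s hs).subset)
          · exact hC₃ s hs t ht
      · intro C hC
        obtain ⟨hC₁, hC₂, hC₃⟩ := mem_trunc_faces.1 hC
        exact mem_trunc_faces.2 ⟨hC₁, fun s hs => (Nat.lt_succ_self j).trans (hC₂ s hs), hC₃⟩)
    (by rw [map_sub, extBd_gen_mul, hbz, hbw, mul_zero, sub_zero, sub_self])
  refine ⟨- extDel k F u, neg_mem (extDel_mem_chainSpan ?_ hu), ?_⟩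
  · intro C hFC hC
    obtain ⟨hC₁, hC₂, hC₃⟩ := mem_trunc_faces.1 hC
    refine ⟨fun s hs => hC₁ (mem_insert_of_mem hs), fun s hs => ?_, fun s hs t ht =>
      hC₃ s (mem_insert_of_mem hs) t (mem_insert_of_mem ht)⟩
    have hne : F ≠ s := fun e => hFC (e ▸ hs)
    refine LE.le.ssubset_of_ne ?_ hne
    rcases hC₃ F (mem_insert_self _ _) s (mem_insert_of_mem hs) with h | h
    · exact h
    · have := hC₂ s (mem_insert_of_mem hs)
      exact (eq_of_subset_of_card_le h (by omega)).ge
  · rw [map_neg, extBd_extDel, neg_neg, hbu, map_sub, extDel_gen_mul_self,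
      extDel_eq_zero (fun C hC hF' => (hC.2.1 F hF').ne rfl) hz, extDel_eq_zero ?_ hw]
    · simp
    · intro C hC hF'
      have := (mem_trunc_faces.1 hC).2.1 F hF'
      omega

lemma upperChains_empty (K : SComplex V) :
    K.upperChains ∅ = ((K.trunc 0).faces : Set (Finset (Finset V))) := by
  ext C
  simp only [upperChains, Set.mem_ofPred_eq, mem_coe, mem_trunc_faces, empty_ssubset, card_pos]

variable [Fintype V]

variable (k) in
/-- The barycentric subdivision of the simplex `s`, joined with `F`. -/
noncomputable def subdiv (F s : Finset V) : Ext k (Finset V) :=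
  if s = ∅ then 1
  else extGen k (F ∪ s) * ∑ v : s, vsgn v.1 s • subdiv F (s.erase v)
termination_by s.card
decreasing_by exact card_erase_lt_of_mem v.2

lemma subdiv_empty (F : Finset V) : subdiv k F ∅ = 1 := by
  rw [subdiv, if_pos rfl]

lemma subdiv_of_nonempty (F : Finset V) {s : Finset V} (hs : s.Nonempty) :
    subdiv k F s = extGen k (F ∪ s) * ∑ v ∈ s, vsgn v s • subdiv k F (s.erase v) := by
  rw [subdiv, if_neg hs.ne_empty, ← sum_coe_sort s]

lemma extBd_subdiv (F s : Finset V) :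
    extBd k (subdiv k F s) = ∑ v ∈ s, vsgn v s • subdiv k F (s.erase v) := by
  induction s using Finset.strongInduction with
  | H s ih =>
    rcases s.eq_empty_or_nonempty with rfl | hs
    · simp [subdiv_empty, extBd_one]
    · rw [subdiv_of_nonempty F hs, extBd_gen_mul, map_sum]
      have h0 : ∑ v ∈ s, extBd k (vsgn v s • subdiv k F (s.erase v)) = 0 := by
        rw [← sum_vsgn_smul_sum_vsgn_smul s (fun v u => subdiv k F ((s.erase v).erase u))
          fun u v => by rw [erase_right_comm]]
        refine sum_congr rfl fun v hv => ?_
        rw [map_zsmul, ih _ (erase_ssubset hv)]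
      rw [h0, mul_zero, sub_zero]

lemma subdiv_mem_chainSpan {F s : Finset V} (h : Disjoint s F) :
    subdiv k F s ∈ chainSpan k
      {C | (∀ t ∈ C, F ⊂ t ∧ t ⊆ F ∪ s) ∧ ∀ t ∈ C, ∀ u ∈ C, t ⊆ u ∨ u ⊆ t} s.card := by
  induction s using Finset.strongInduction with
  | H s ih =>
    rcases s.eq_empty_or_nonempty with rfl | hs
    · rw [subdiv_empty]
      exact extProd_mem_chainSpan (l := []) rfl (by simp)
    · rw [subdiv_of_nonempty F hs, ← Nat.sub_add_cancel hs.card_pos]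
      refine gen_mul_mem_chainSpan (P := {C | (∀ t ∈ C, F ⊂ t ∧ t ⊆ F ∪ s) ∧
        ∀ t ∈ C, ∀ u ∈ C, t ⊆ u ∨ u ⊆ t}) ?_ (sum_mem fun v hv => zsmul_mem ?_ _)
      · rintro C ⟨hC₁, hC₂⟩
        refine ⟨fun t ht => ?_, fun t ht u hu => ?_⟩
        · rcases mem_insert.1 ht with rfl | ht
          · refine ⟨LE.le.ssubset_of_ne subset_union_left fun e => ?_, subset_rfl⟩
            obtain ⟨x, hx⟩ := hs
            exact disjoint_left.1 h hx (e ▸ mem_union_right _ hx)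
          · exact hC₁ t ht
        · rcases mem_insert.1 ht with rfl | ht <;> rcases mem_insert.1 hu with rfl | hu
          · exact Or.inl subset_rfl
          · exact Or.inr (hC₁ u hu).2
          · exact Or.inl (hC₁ t ht).2
          · exact hC₂ t ht u hu
      · have := ih _ (erase_ssubset hv) (h.mono_left (erase_subset _ _))
        rw [card_erase_of_mem hv] at this
        refine chainSpan_mono ?_ _ this
        rintro C ⟨hC₁, hC₂⟩
        exact ⟨fun t ht => ⟨(hC₁ t ht).1, (hC₁ t ht).2.trans
          (union_subset_union_right (erase_subset _ _))⟩, hC₂⟩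

lemma extMap_subdiv {F s : Finset V} (h : Disjoint s F) {f : Finset V → V}
    (hf : ∀ t, F ⊂ t → f t ∈ t \ F) : extMap f (subdiv k F s) = ordProd k s := by
  induction s using Finset.strongInduction with
  | H s ih =>
    rcases s.eq_empty_or_nonempty with rfl | hs
    · rw [subdiv_empty, map_one, ordProd_empty]
    · have hm : f (F ∪ s) ∈ s := by
        have : f (F ∪ s) ∈ (F ∪ s) \ F := by
          refine hf _ (LE.le.ssubset_of_ne subset_union_left fun e => ?_)
          obtain ⟨x, hx⟩ := hs
          exact disjoint_left.1 h hx (e ▸ mem_union_right _ hx)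
        simp only [mem_sdiff, mem_union] at this
        tauto
      rw [subdiv_of_nonempty F hs, map_mul, extMap_gen, map_sum, ← extGen_mul_extBd_ordProd hm,
        extBd_ordProd]
      congr 1
      refine sum_congr rfl fun v hv => ?_
      rw [map_zsmul, ih _ (erase_ssubset hv) (h.mono_left (erase_subset _ _))]

omit [Fintype V] in
lemma extMap_mem_chainSpan {K : SComplex V} {F : Finset V} (hF : F ∈ K.faces) {f : Finset V → V}
    (hf : ∀ t, F ⊂ t → f t ∈ t \ F) {n : ℕ} {x : Ext k (Finset V)}
    (hx : x ∈ chainSpan k (K.upperChains F) n) : extMap f x ∈ chainSpan k (K.linkFam F ∅) n := by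
  have : chainSpan k (K.upperChains F) n ≤
      (chainSpan k (K.linkFam F ∅) n).comap (extMap f).toLinearMap := by
    refine chainSpan_le fun l h₁ h₂ h₃ => ?_
    rw [Submodule.mem_comap, AlgHom.toLinearMap_apply, extMap_extProd]
    refine extProd_mem_chainSpan (by simpa using h₂) ⟨?_, disjoint_empty_right _, ?_⟩
    · rw [disjoint_left]
      intro x hx
      simp only [List.mem_toFinset, List.mem_map] at hx
      obtain ⟨t, ht, rfl⟩ := hx
      exact (mem_sdiff.1 (hf t (h₃.2.1 t (by simpa using ht)))).2
    · rcases l.toFinset.eq_empty_or_nonempty with he | he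
      · obtain rfl : l = [] := by simpa using he
        simpa using hF
      · obtain ⟨t, ht, hmax⟩ := exists_max_image l.toFinset card he
        refine K.down_closed (h₃.1 ht) (union_subset ?_ (h₃.2.1 t ht).subset)
        intro x hx
        simp only [List.mem_toFinset, List.mem_map] at hx
        obtain ⟨u, hu, rfl⟩ := hx
        have hu : u ∈ l.toFinset := by simpa using hu
        have h := (mem_sdiff.1 (hf u (h₃.2.1 u hu))).1
        rcases h₃.2.2 u hu t ht with h' | h'
        · exact h' h
        · exact (eq_of_subset_of_card_le h' (hmax u hu)).ge h
  exact this hx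

lemma chainSpan_eq_map_linearCombination (P : Set (Finset V)) (n : ℕ) :
    ∀ z ∈ chainSpan k P n, ∃ c : Finset V →₀ k, (∀ s ∈ c.support, s ∈ P ∧ s.card = n) ∧
      Finsupp.linearCombination k (ordProd k) c = z := by
  intro z hz
  have h : chainSpan k P n ≤
      Submodule.span k (ordProd k '' {s | s ∈ P ∧ s.card = n}) := by
    refine chainSpan_le fun l h₁ h₂ h₃ => ?_
    have h : ordProd k l.toFinset ∈
        Submodule.span k (ordProd k '' {s | s ∈ P ∧ s.card = n}) :=
      Submodule.subset_span ⟨_, ⟨h₃, by rw [List.toFinset_card_of_nodup h₁, h₂]⟩, rfl⟩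
    rcases ordProd_toFinset (k := k) l h₁ with e | e <;> rw [e]
    · exact h
    · exact neg_mem h
  obtain ⟨c, hc, rfl⟩ := (Finsupp.mem_span_image_iff_linearCombination k).1 (h hz)
  exact ⟨c, fun s hs => hc hs, rfl⟩

lemma acyclic_linkFam_of_upperChains [Nonempty V] {K : SComplex V} {F : Finset V}
    (hF : F ∈ K.faces) {i : ℕ} (h : Acyclic k (K.upperChains F) i) :
    Acyclic k (K.linkFam F ∅) i := by
  intro z hz hbz
  obtain ⟨c, hc, rfl⟩ := chainSpan_eq_map_linearCombination _ _ z hz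
  obtain ⟨f, hf⟩ : ∃ f : Finset V → V, ∀ t, F ⊂ t → f t ∈ t \ F := by
    have : ∀ t : Finset V, ∃ v : V, F ⊂ t → v ∈ t \ F := fun t => by
      by_cases ht : F ⊂ t
      · obtain ⟨v, hv, hv'⟩ := exists_of_ssubset ht
        exact ⟨v, fun _ => mem_sdiff.2 ⟨hv, hv'⟩⟩
      · exact ⟨Classical.arbitrary V, fun h => (ht h).elim⟩
    choose f hf using this
    exact ⟨f, hf⟩
  have hsub : Finsupp.linearCombination k (subdiv k F) c ∈ chainSpan k (K.upperChains F) i := by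
    rw [Finsupp.linearCombination_apply]
    refine sum_mem fun s hs => Submodule.smul_mem _ _ ?_
    obtain ⟨⟨h₁, _, h₂⟩, h₃⟩ := hc s hs
    have := subdiv_mem_chainSpan (k := k) h₁
    rw [h₃] at this
    refine chainSpan_mono ?_ _ this
    rintro C ⟨hC₁, hC₂⟩
    exact ⟨fun t ht => K.down_closed h₂ (by rw [union_comm]; exact (hC₁ t ht).2),
      fun t ht => (hC₁ t ht).1, hC₂⟩
  have hmap : extMap f (Finsupp.linearCombination k (subdiv k F) c) =
      Finsupp.linearCombination k (ordProd k) c := by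
    rw [Finsupp.linearCombination_apply, Finsupp.linearCombination_apply, Finsupp.sum,
      Finsupp.sum, map_sum]
    refine sum_congr rfl fun s hs => ?_
    rw [map_smul, extMap_subdiv (hc s hs).1.1 hf]
  let D : (Finset V →₀ k) →ₗ[k] (Finset V →₀ k) :=
    Finsupp.linearCombination k fun s => ∑ v ∈ s, vsgn v s • Finsupp.single (s.erase v) (1 : k)
  have hD : ∀ {W : Type} (g : Finset V → Ext k W),
      (∀ s, extBd k (g s) = ∑ v ∈ s, vsgn v s • g (s.erase v)) →
      extBd k (Finsupp.linearCombination k g c) = Finsupp.linearCombination k g (D c) := by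
    intro W g hg
    suffices h : (extBd k).comp (Finsupp.linearCombination k g) =
        (Finsupp.linearCombination k g).comp D from LinearMap.congr_fun h c
    refine Finsupp.lhom_ext' fun s => LinearMap.ext_ring ?_
    simp only [D, LinearMap.comp_apply, Finsupp.lsingle_apply,
      Finsupp.linearCombination_single, one_smul, hg, map_sum, map_zsmul]
  have hDc : D c = 0 := by
    rw [hD _ (extBd_ordProd k)] at hbz
    exact linearIndependent_ordProd k V (hbz.trans (map_zero _).symm)
  obtain ⟨w, hw, hbw⟩ := h _ hsub (by rw [hD _ (extBd_subdiv F), hDc, map_zero])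
  exact ⟨extMap f w, extMap_mem_chainSpan hF hf hw, by rw [extBd_extMap f hw, hbw, hmap]⟩

/-- The vanishing of the reduced homology of the links of the induced subcomplexes, in the range
given by `D` and `ℓ`. -/
def LinkAcyclic (k : Type) [Field k] (K : SComplex V) (D ℓ : ℕ) : Prop :=
  ∀ (F N : Finset V) (i : ℕ), i + F.card + N.card < D → i < ℓ → Acyclic k (K.linkFam F N) i

omit [Fintype V] in
lemma linkFam_eq_empty {K : SComplex V} {F N : Finset V} (hF : F ∉ K.faces) (s : Finset V) :
    s ∉ K.linkFam F N := fun h => hF (K.down_closed h.2.2 subset_union_right)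

lemma linkAcyclic_of_trunc {K : SComplex V} {D ℓ : ℕ} (hD : D ≤ K.rank)
    (h : ∀ i j : ℕ, i + j < D → i ≤ ℓ → HVanish k (K.trunc j) i) : LinkAcyclic k K D ℓ := by
  intro F N
  induction N using Finset.induction generalizing F with
  | empty =>
    intro i hi hil
    by_cases hF : F ∈ K.faces
    · have : Nonempty V := by
        by_contra hV
        rw [not_nonempty_iff] at hV
        have : K.rank = 0 := by
          rw [rank, ← Nat.le_zero, Finset.sup_le_iff]
          intro s _
          rw [eq_empty_of_isEmpty s, card_empty]
        omega
      refine acyclic_linkFam_of_upperChains hF ?_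
      simp only [card_empty, add_zero] at hi
      rcases hj : F.card with _ | j
      · obtain rfl := card_eq_zero.1 hj
        rw [upperChains_empty]
        exact (hVanish_iff_acyclic _ _).1 (h i 0 (by omega) hil.le)
      · exact acyclic_upperChains_of_trunc hF hj
          ((hVanish_iff_acyclic _ _).1 (h i (j + 1) (by omega) hil.le))
          ((hVanish_iff_acyclic _ _).1 (h (i + 1) j (by omega) hil))
    · exact Acyclic.of_isEmpty (linkFam_eq_empty hF) i
  | insert v N hv ih =>
    intro i hi hil
    rw [card_insert_of_notMem hv] at hi
    by_cases hvF : v ∈ F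
    · have : K.linkFam F (insert v N) = K.linkFam F N := by
        ext s
        simp only [linkFam, Set.mem_ofPred_eq, disjoint_insert_right]
        constructor
        · rintro ⟨h₁, ⟨_, h₂⟩, h₃⟩
          exact ⟨h₁, h₂, h₃⟩
        · rintro ⟨h₁, h₂, h₃⟩
          exact ⟨h₁, ⟨disjoint_right.1 h₁ hvF, h₂⟩, h₃⟩
      rw [this]
      exact ih F i (by omega) hil
    · refine Acyclic.deletion v (P := K.linkFam F N) (L := K.linkFam (insert v F) N) ?_ ?_ ?_
        (ih F i (by omega) hil) (ih _ i (by rw [card_insert_of_notMem hvF]; omega) hil)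
      · intro s
        simp only [linkFam, Set.mem_ofPred_eq, disjoint_insert_right]
        tauto
      · intro s
        simp only [linkFam, Set.mem_ofPred_eq, disjoint_insert_right, disjoint_insert_left,
          insert_union, union_insert]
        tauto
      · rintro s ⟨h₁, h₂, h₃⟩ t hts
        exact ⟨h₁.mono_left hts, h₂.mono_left hts, K.down_closed h₃ (union_subset_union_left hts)⟩

omit [Fintype V] in
lemma linkFam_link {K : SComplex V} {v : V} {F N : Finset V} (hv : v ∉ F) :
    (K.link {v}).linkFam F N = {s | s ∈ K.linkFam (insert v F) N} := by
  ext s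
  simp only [linkFam, link, Set.mem_ofPred_eq, mem_filter, disjoint_insert_right,
    disjoint_singleton_left, mem_union, singleton_union, union_insert, not_or]
  constructor
  · rintro ⟨h₁, h₂, h₃, h₄, h₅⟩
    exact ⟨⟨h₄.1, h₁⟩, h₂, h₅⟩
  · rintro ⟨h₁, h₂, h₃⟩
    exact ⟨h₁.2, h₂, K.down_closed h₃ (subset_insert _ _), ⟨h₁.1, hv⟩, h₃⟩

omit [Fintype V] in
lemma LinkAcyclic.link {K : SComplex V} {D ℓ : ℕ} (h : LinkAcyclic k K D ℓ) (v : V) :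
    LinkAcyclic k (K.link {v}) (D - 1) ℓ := by
  intro F N i hi hil
  by_cases hv : v ∈ F
  · refine Acyclic.of_isEmpty (linkFam_eq_empty ?_) i
    simp [SComplex.link, hv]
  · rw [linkFam_link hv]
    exact h (insert v F) N i (by rw [card_insert_of_notMem hv]; omega) hil

end Links

section Cohomology

variable {k : Type} [Field k] {V : Type} [DecidableEq V] [Fintype V]

/-- Vanishing of homology implies vanishing of cohomology. -/
lemma Acyclic.exists_coboundary {Q : Set (Finset V)} {i : ℕ} (h : Acyclic k Q i)
    (φ : Finset V → k)
    (hφ : ∀ G ∈ Q, G.card = i + 1 → ∑ v ∈ G, vsgn v G • φ (G.erase v) = 0) :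
    ∃ ψ : Finset V → k, ∀ F ∈ Q, F.card = i → φ F = ∑ v ∈ F, vsgn v F • ψ (F.erase v) := by
  obtain ⟨g, hg⟩ := LinearMap.exists_leftInverse_of_injective
    (Finsupp.linearCombination k (ordProd k : Finset V → Ext k V))
    (LinearMap.ker_eq_bot.2 (linearIndependent_ordProd k V))
  let Φ : Ext k V →ₗ[k] k := (Finsupp.linearCombination k φ).comp g
  have hΦ : ∀ s, Φ (ordProd k s) = φ s := by
    intro s
    have := LinearMap.congr_fun hg (Finsupp.single s 1)
    simp only [LinearMap.comp_apply, Finsupp.linearCombination_single, one_smul,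
      LinearMap.id_apply] at this
    simp [Φ, this]
  have hbd : ∀ w ∈ chainSpan k Q (i + 1), Φ (extBd k w) = 0 := by
    intro w hw
    obtain ⟨c, hc, rfl⟩ := chainSpan_eq_map_linearCombination _ _ w hw
    rw [Finsupp.linearCombination_apply, Finsupp.sum, map_sum, map_sum]
    refine sum_eq_zero fun s hs => ?_
    rw [map_smul, map_smul, extBd_ordProd, map_sum]
    simp_rw [map_zsmul, hΦ]
    rw [hφ s (hc s hs).1 (hc s hs).2, smul_zero]
  have hmem : Φ.domRestrict (chainSpan k Q i) ∈
      LinearMap.range ((extBd k).domRestrict (chainSpan k Q i)).dualMap := by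
    rw [LinearMap.range_dualMap_eq_dualAnnihilator_ker, Submodule.mem_dualAnnihilator]
    rintro ⟨z, hz⟩ hbz
    obtain ⟨w, hw, rfl⟩ := h z hz hbz
    exact hbd w hw
  obtain ⟨Ψ, hΨ⟩ := hmem
  refine ⟨fun s => Ψ (ordProd k s), fun F hF hFi => ?_⟩
  have hF' : ordProd k F ∈ chainSpan k Q i := hFi ▸ ordProd_mem_chainSpan hF
  have := LinearMap.congr_fun hΨ ⟨_, hF'⟩
  simp only [LinearMap.dualMap_apply, LinearMap.domRestrict_apply, hΦ, extBd_ordProd, map_sum,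
    map_zsmul] at this
  exact this.symm

lemma vsgn_union {v : V} {N F : Finset V} (h : Disjoint N F) :
    vsgn v (N ∪ F) = vsgn v N * vsgn v F := by
  let _ : LinearOrder V := arbOrder V
  rw [vsgn, vsgn, vsgn, ← pow_add, filter_union, card_union_of_disjoint]
  exact disjoint_filter_filter h

/-- The version of `Acyclic.exists_coboundary` for the sets containing a fixed set `N`. -/
lemma Acyclic.exists_coboundary_union {Q : Set (Finset V)} {N : Finset V} {i : ℕ}
    (h : Acyclic k Q i) (hQ : ∀ s ∈ Q, Disjoint N s) (φ : Finset V → k)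
    (hφ : ∀ G ∈ Q, G.card = i + 1 → ∑ v ∈ G, vsgn v (N ∪ G) • φ ((N ∪ G).erase v) = 0) :
    ∃ ψ : Finset V → k, ∀ F ∈ Q, F.card = i →
      φ (N ∪ F) = ∑ v ∈ F, vsgn v (N ∪ F) • ψ ((N ∪ F).erase v) := by
  have key : ∀ (f : Finset V → k), ∀ G ∈ Q,
      ∑ v ∈ G, vsgn v G • (∏ u ∈ G.erase v, vsgn u N) • f (N ∪ G.erase v) =
        (∏ u ∈ G, vsgn u N) • ∑ v ∈ G, vsgn v (N ∪ G) • f ((N ∪ G).erase v) := by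
    intro f G hG
    rw [smul_sum]
    refine sum_congr rfl fun v hv => ?_
    have hvN : v ∉ N := disjoint_right.1 (hQ G hG) hv
    rw [erase_union_distrib, erase_eq_of_notMem hvN, smul_smul, smul_smul, vsgn_union (hQ G hG),
      ← mul_prod_erase _ _ hv]
    congr 1
    linear_combination -(vsgn v G * ∏ x ∈ G.erase v, vsgn x N) * vsgn_mul_self v N
  have hsq : ∀ G : Finset V, (∏ u ∈ G, vsgn u N) * ∏ u ∈ G, vsgn u N = 1 := by
    intro G
    rw [← prod_mul_distrib]
    exact prod_eq_one fun u _ => vsgn_mul_self u N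
  obtain ⟨ψ, hψ⟩ := h.exists_coboundary (fun F => (∏ u ∈ F, vsgn u N) • φ (N ∪ F))
    fun G hG hGi => by rw [key φ G hG, hφ G hG hGi, smul_zero]
  refine ⟨fun E => (∏ u ∈ E \ N, vsgn u N) • ψ (E \ N), fun F hF hFi => ?_⟩
  have h₁ := hψ F hF hFi
  have h₂ := key (fun E => (∏ u ∈ E \ N, vsgn u N) • ψ (E \ N)) F hF
  have h₃ : ∀ v, (N ∪ F.erase v) \ N = F.erase v := fun v => by
    rw [union_sdiff_cancel_left ((hQ F hF).mono_right (erase_subset _ _))]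
  simp only [h₃, smul_smul (∏ u ∈ _, vsgn u N), hsq, one_smul] at h₂
  rw [← h₁] at h₂
  have := congrArg (fun x => (∏ u ∈ F, vsgn u N) • x) h₂
  simpa only [smul_smul, hsq, one_smul] using this

end Cohomology

section Koszul

variable {V : Type} [DecidableEq V]

/-- The exponent of a squarefree monomial. -/
noncomputable def indic (s : Finset V) : V →₀ ℕ := Finsupp.indicator s fun _ _ => 1

lemma indic_apply (s : Finset V) (v : V) : indic s v = if v ∈ s then 1 else 0 := by
  simp [indic, Finsupp.indicator_apply]

lemma indic_le_iff {s : Finset V} {m : V →₀ ℕ} : indic s ≤ m ↔ s ⊆ m.support := by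
  rw [Finsupp.le_def]
  constructor
  · intro h v hv
    have := h v
    rw [indic_apply, if_pos hv] at this
    exact Finsupp.mem_support_iff.2 (by omega)
  · intro h v
    rw [indic_apply]
    split_ifs with hv
    · exact Nat.one_le_iff_ne_zero.2 (Finsupp.mem_support_iff.1 (h hv))
    · exact Nat.zero_le _

variable {k : Type} [Field k]

lemma prod_X_eq_monomial (s : Finset V) :
    ∏ v ∈ s, (MvPolynomial.X v : MvPolynomial V k) = MvPolynomial.monomial (indic s) 1 := by
  induction s using Finset.induction with
  | empty =>
    have : indic (∅ : Finset V) = 0 := by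
      ext v
      simp [indic_apply]
    rw [this]
    simp
  | insert v s hv ih =>
    rw [prod_insert hv, ih, MvPolynomial.X, MvPolynomial.monomial_mul, one_mul]
    have : Finsupp.single v 1 + indic s = indic (insert v s) := by
      ext u
      rw [Finsupp.add_apply, Finsupp.single_apply, indic_apply, indic_apply]
      by_cases hu : v = u
      · subst hu
        simp [hv]
      · simp [hu, Ne.symm hu]
    rw [this]

lemma mem_srIdeal_iff {K : SComplex V} {f : MvPolynomial V k} :
    f ∈ srIdeal k K ↔ ∀ m : V →₀ ℕ, m.support ∈ K.faces → f.coeff m = 0 := by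
  have : srIdeal k K = Ideal.span
      ((fun m => MvPolynomial.monomial m (1 : k)) '' (indic '' {s : Finset V | s ∉ K.faces})) := by
    rw [srIdeal, Set.image_image]
    simp_rw [prod_X_eq_monomial]
  rw [this, MvPolynomial.mem_ideal_span_monomial_image]
  constructor
  · intro h m hm
    by_contra hf
    obtain ⟨_, ⟨s, hs, rfl⟩, hle⟩ := h m (MvPolynomial.mem_support_iff.2 hf)
    exact hs (K.down_closed hm (indic_le_iff.1 hle))
  · intro h m hm
    refine ⟨_, ⟨m.support, fun hs => MvPolynomial.mem_support_iff.1 hm (h m hs), rfl⟩,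
      indic_le_iff.2 subset_rfl⟩

variable [Fintype V] {R M : Type} [CommRing R] [AddCommGroup M] [Module R M]

/-- The differential of the Koszul cochain complex. -/
noncomputable def koszul (x : V → R) (c : Finset V → M) (F : Finset V) : M :=
  ∑ v ∈ F, vsgn v F • x v • c (F.erase v)

variable (M) in
/-- Exactness of the Koszul cochain complex in degrees less than `n`. -/
def KoszulExact (x : V → R) (n : ℕ) : Prop :=
  ∀ j < n, ∀ c : Finset V → M, (∀ F, F.card = j + 1 → koszul x c F = 0) →
    ∃ b : Finset V → M, ∀ F, F.card = j → c F = koszul x b F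

/-- The multigraded pieces of the Koszul complex of a Stanley–Reisner ring are exact. -/
lemma LinkAcyclic.exists_coboundary {K : SComplex V} {D ℓ : ℕ} (h : LinkAcyclic k K D ℓ)
    {j : ℕ} (hD : j < D) (hl : j < ℓ) (N P : Finset V) (hP : ∀ p ∈ P, p ∉ N)
    (φ : Finset V → k)
    (hφ : ∀ G, N ⊆ G → G.card = j + 1 → P ∪ (G \ N) ∈ K.faces →
      ∑ v ∈ G \ N, vsgn v G • φ (G.erase v) = 0) :
    ∃ ψ : Finset V → k, ∀ F, N ⊆ F → F.card = j → P ∪ (F \ N) ∈ K.faces →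
      φ F = ∑ v ∈ F \ N, vsgn v F • ψ (F.erase v) := by
  by_cases hj : N.card ≤ j
  · have hac : Acyclic k {s | Disjoint N s ∧ P ∪ s ∈ K.faces} (j - N.card) := by
      rcases P.eq_empty_or_nonempty with rfl | ⟨p, hp⟩
      · have : {s | Disjoint N s ∧ ∅ ∪ s ∈ K.faces} = K.linkFam ∅ N := by
          ext s
          simp [linkFam, disjoint_comm]
        rw [this]
        exact h ∅ N _ (by simp; omega) (by omega)
      · refine Acyclic.of_cone p ?_ _
        rintro s ⟨h₁, h₂⟩
        refine ⟨disjoint_insert_right.2 ⟨hP p hp, h₁⟩, ?_⟩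
        rwa [union_insert, insert_eq_of_mem (mem_union_left _ hp)]
    obtain ⟨ψ, hψ⟩ := hac.exists_coboundary_union (fun s hs => hs.1) φ (by
      rintro G ⟨hG₁, hG₂⟩ hGc
      have e : (N ∪ G) \ N = G := union_sdiff_cancel_left hG₁
      have := hφ (N ∪ G) subset_union_left
        (by rw [card_union_of_disjoint hG₁]; omega) (by rwa [e])
      rwa [e] at this)
    refine ⟨ψ, fun F hNF hFc hF => ?_⟩
    have := hψ (F \ N) ⟨disjoint_sdiff, hF⟩ (by rw [card_sdiff_of_subset hNF, hFc])
    rwa [union_sdiff_of_subset hNF] at this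
  · refine ⟨0, fun F hNF hFc _ => ?_⟩
    have := card_le_card hNF
    omega

/-- The exponent with vertex degrees `a` lowered by one outside `F`. -/
noncomputable def lower (a : V →₀ ℕ) (F : Finset V) : V →₀ ℕ := a - indic Fᶜ

lemma lower_apply (a : V →₀ ℕ) (F : Finset V) (v : V) :
    lower a F v = if v ∈ F then a v else a v - 1 := by
  rw [lower, Finsupp.tsub_apply, indic_apply]
  by_cases hv : v ∈ F <;> simp [hv]

lemma support_lower {a : V →₀ ℕ} {F : Finset V} :
    (lower a F).support = univ.filter (fun v => 2 ≤ a v) ∪ (F \ a.supportᶜ) := by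
  ext v
  rw [Finsupp.mem_support_iff, lower_apply]
  by_cases hv : v ∈ F <;> simp [hv] <;> omega

lemma inter_support_lower {a : V →₀ ℕ} {F : Finset V} :
    F ∩ (lower a F).support = F \ a.supportᶜ := by
  ext v
  rw [mem_inter, Finsupp.mem_support_iff, lower_apply]
  by_cases hv : v ∈ F <;> simp [hv]

lemma lower_sub_single {a : V →₀ ℕ} {F : Finset V} {v : V} (hv : v ∈ F) :
    lower a F - Finsupp.single v 1 = lower a (F.erase v) := by
  ext u
  rw [Finsupp.tsub_apply, lower_apply, lower_apply, Finsupp.single_apply]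
  by_cases hu : v = u
  · subst hu
    simp [hv]
  · simp [hu, Ne.symm hu]

lemma lower_eq_iff {a m : V →₀ ℕ} {E : Finset V} :
    a.supportᶜ ⊆ E ∧ lower a E = m ↔ a = m + indic Eᶜ := by
  constructor
  · rintro ⟨h, rfl⟩
    ext v
    rw [Finsupp.add_apply, lower_apply, indic_apply]
    by_cases hv : v ∈ E
    · simp [hv]
    · have : a v ≠ 0 := fun e => hv (h (by simpa using e))
      simp only [hv, if_false, mem_compl, not_false_eq_true, if_true]
      omega
  · rintro rfl
    constructor
    · intro v hv
      by_contra h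
      simp [indic_apply, h] at hv
    · ext v
      rw [lower_apply, Finsupp.add_apply, indic_apply]
      by_cases hv : v ∈ E <;> simp [hv]

lemma koszulExact_srRing {K : SComplex V} {D ℓ n : ℕ} (h : LinkAcyclic k K D ℓ)
    (hD : n ≤ D) (hl : n ≤ ℓ) :
    KoszulExact (SRRing k K)
      (fun v => Ideal.Quotient.mk (srIdeal k K) (MvPolynomial.X v)) n := by
  intro j hj c hc
  choose f hf using fun F => Ideal.Quotient.mk_surjective (I := srIdeal k K) (c F)
  have hmk : ∀ (g : Finset V → MvPolynomial V k) F,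
      koszul (fun v => Ideal.Quotient.mk (srIdeal k K) (MvPolynomial.X v : MvPolynomial V k))
        (fun E => Ideal.Quotient.mk (srIdeal k K) (g E)) F =
      Ideal.Quotient.mk (srIdeal k K) (koszul (MvPolynomial.X : V → MvPolynomial V k) g F) := by
    intro g F
    simp [koszul, map_sum]
  obtain rfl : (fun E => Ideal.Quotient.mk (srIdeal k K) (f E)) = c := funext hf
  have hcoeff : ∀ (g : Finset V → MvPolynomial V k) F (m : V →₀ ℕ),
      (koszul (MvPolynomial.X : V → MvPolynomial V k) g F).coeff m =
      ∑ v ∈ F ∩ m.support, vsgn v F • (g (F.erase v)).coeff (m - Finsupp.single v 1) := by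
    intro g F m
    rw [koszul, MvPolynomial.coeff_sum F, ← filter_mem_eq_inter, sum_filter]
    refine sum_congr rfl fun v _ => ?_
    rw [← MvPolynomial.lcoeff_apply, map_zsmul, MvPolynomial.lcoeff_apply, smul_eq_mul,
      MvPolynomial.coeff_X_mul']
    split_ifs <;> simp
  have hex : ∀ a : V →₀ ℕ, ∃ ψ : Finset V → k, ∀ F, a.supportᶜ ⊆ F → F.card = j →
      (lower a F).support ∈ K.faces →
      (f F).coeff (lower a F) = ∑ v ∈ F \ a.supportᶜ, vsgn v F • ψ (F.erase v) := by
    intro a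
    simp_rw [support_lower]
    refine h.exists_coboundary (hj.trans_le hD) (hj.trans_le hl) _ _ ?_
      (fun F => (f F).coeff (lower a F)) ?_
    · intro p hp
      simp only [mem_filter, mem_univ, true_and] at hp
      simp only [mem_compl, Finsupp.mem_support_iff]
      omega
    · intro G _ hGc hG
      have h₁ := hc G hGc
      rw [hmk, Ideal.Quotient.eq_zero_iff_mem, mem_srIdeal_iff] at h₁
      have h₂ := h₁ (lower a G) (by rwa [support_lower])
      rw [hcoeff, inter_support_lower] at h₂
      rw [← h₂]
      refine sum_congr rfl fun v hv => ?_
      rw [lower_sub_single (mem_sdiff.1 hv).1]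
  choose ψ hψ using hex
  let A : Finset (V →₀ ℕ) := univ.biUnion fun F => (f F).support.image fun m => m + indic Fᶜ
  let b : Finset V → MvPolynomial V k := fun E => ∑ a ∈ A,
    if a.supportᶜ ⊆ E then MvPolynomial.monomial (lower a E) (ψ a E) else 0
  have hb : ∀ E m, (b E).coeff m = if m + indic Eᶜ ∈ A then ψ (m + indic Eᶜ) E else 0 := by
    intro E m
    rw [MvPolynomial.coeff_sum A, ← sum_ite_eq' A (m + indic Eᶜ) fun a => ψ a E]
    refine sum_congr rfl fun a _ => ?_
    by_cases ha : a = m + indic Eᶜ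
    · obtain ⟨h₁, h₂⟩ := lower_eq_iff.2 ha
      rw [if_pos h₁, if_pos ha, h₂, MvPolynomial.coeff_monomial, if_pos rfl]
    · rw [if_neg ha]
      split_ifs with h₁
      · rw [MvPolynomial.coeff_monomial, if_neg fun h₂ => ha (lower_eq_iff.1 ⟨h₁, h₂⟩)]
      · exact MvPolynomial.coeff_zero _
  refine ⟨fun E => Ideal.Quotient.mk (srIdeal k K) (b E), fun F hF => ?_⟩
  rw [hmk, Ideal.Quotient.eq, mem_srIdeal_iff]
  intro m hm
  rw [MvPolynomial.coeff_sub, sub_eq_zero, hcoeff]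
  obtain ⟨h₁, h₂⟩ := lower_eq_iff.2 (rfl : m + indic Fᶜ = m + indic Fᶜ)
  have h₃ : ∀ v ∈ F ∩ m.support,
      (b (F.erase v)).coeff (m - Finsupp.single v 1) =
        if m + indic Fᶜ ∈ A then ψ (m + indic Fᶜ) (F.erase v) else 0 := by
    intro v hv
    rw [mem_inter] at hv
    have e : m - Finsupp.single v 1 + indic (F.erase v)ᶜ = m + indic Fᶜ := by
      refine (lower_eq_iff.1 ⟨?_, ?_⟩).symm
      · intro u hu
        refine mem_erase.2 ⟨?_, h₁ hu⟩
        rintro rfl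
        have := Finsupp.mem_support_iff.1 hv.2
        simp only [mem_compl, Finsupp.mem_support_iff, Finsupp.add_apply, not_not] at hu
        omega
      · rw [← lower_sub_single hv.1, h₂]
    rw [hb, e]
  rw [sum_congr rfl fun v hv => by rw [h₃ v hv]]
  by_cases hA : m + indic Fᶜ ∈ A
  · have := hψ _ F h₁ hF (by rwa [h₂])
    rw [← inter_support_lower, h₂] at this
    simpa only [if_pos hA] using this
  · simp only [if_neg hA, smul_zero, sum_const_zero]
    by_contra hne
    exact hA (mem_biUnion.2 ⟨F, mem_univ _, mem_image_of_mem _ (MvPolynomial.mem_support_iff.2 hne)⟩)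

end Koszul

section KoszulRegular

open scoped Pointwise

variable {V : Type} [DecidableEq V] [Fintype V] {R M : Type} [CommRing R] [AddCommGroup M]
  [Module R M]

lemma koszul_koszul (x : V → R) (c : Finset V → M) (G : Finset V) :
    koszul x (koszul x c) G = 0 := by
  rw [← sum_vsgn_smul_sum_vsgn_smul G fun v u => x v • x u • c ((G.erase v).erase u)]
  · refine sum_congr rfl fun v _ => ?_
    rw [koszul, smul_sum]
    simp_rw [smul_comm (x v) (vsgn _ _)]
  · intro u v
    rw [erase_right_comm, smul_comm]

lemma koszul_sub (x : V → R) (b c : Finset V → M) (F : Finset V) :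
    koszul x (fun E => b E - c E) F = koszul x b F - koszul x c F := by
  simp only [koszul, smul_sub, sum_sub_distrib]

lemma koszul_smul (x : V → R) (a : R) (c : Finset V → M) (F : Finset V) :
    koszul x (fun E => a • c E) F = a • koszul x c F := by
  simp only [koszul, smul_sum]
  refine sum_congr rfl fun v _ => ?_
  rw [smul_comm a, smul_comm a]

lemma koszul_map {M' : Type} [AddCommGroup M'] [Module R M'] (x : V → R) (g : M →ₗ[R] M')
    (c : Finset V → M) (F : Finset V) :
    koszul x (fun E => g (c E)) F = g (koszul x c F) := by
  simp [koszul, map_sum]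

lemma koszul_congr {x : V → R} {b c : Finset V → M} {F : Finset V} {j : ℕ}
    (hF : F.card = j + 1) (h : ∀ E, E.card = j → b E = c E) : koszul x b F = koszul x c F := by
  refine sum_congr rfl fun v hv => ?_
  rw [h _ (by rw [card_erase_of_mem hv, hF, Nat.add_sub_cancel])]

lemma KoszulExact.quotSMulTop {x : V → R} {n : ℕ} (h : KoszulExact M x (n + 1)) {a : R}
    (ha : IsSMulRegular M a) : KoszulExact (QuotSMulTop a M) x n := by
  intro j hj c hc
  choose f hf using fun F => Submodule.mkQ_surjective (a • (⊤ : Submodule R M)) (c F)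
  obtain rfl : (fun E => Submodule.mkQ (a • (⊤ : Submodule R M)) (f E)) = c := funext hf
  have hlift : ∀ F, ∃ e : M, F.card = j + 1 → koszul x f F = a • e := by
    intro F
    by_cases hF : F.card = j + 1
    · have := hc F hF
      rw [koszul_map, Submodule.mkQ_apply, Submodule.Quotient.mk_eq_zero,
        Submodule.mem_smul_pointwise_iff_exists] at this
      obtain ⟨e, _, he⟩ := this
      exact ⟨e, fun _ => he.symm⟩
    · exact ⟨0, fun h => (hF h).elim⟩
  choose e he using hlift
  obtain ⟨g, hg⟩ := h (j + 1) (by omega) e fun G hG => by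
    refine ha ?_
    change a • koszul x e G = a • 0
    rw [smul_zero, ← koszul_smul, ← koszul_koszul x f G]
    exact koszul_congr hG fun E hE => (he E hE).symm
  obtain ⟨b, hb⟩ := h j (by omega) (fun E => f E - a • g E) fun F hF => by
    rw [koszul_sub, koszul_smul, he F hF, hg F hF, sub_self]
  refine ⟨fun E => Submodule.mkQ (a • (⊤ : Submodule R M)) (b E), fun F hF => ?_⟩
  rw [koszul_map, ← hb F hF, map_sub, eq_comm, sub_eq_self, Submodule.mkQ_apply,
    Submodule.Quotient.mk_eq_zero]
  exact Submodule.smul_mem_pointwise_smul _ _ _ trivial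

lemma KoszulExact.exists_isSMulRegular [IsNoetherianRing R] [Module.Finite R M] {x : V → R}
    {n : ℕ} (h : KoszulExact M x (n + 1)) :
    ∃ a ∈ Ideal.span (Set.range x), IsSMulRegular M a := by
  by_contra! hne
  have hsub : (Ideal.span (Set.range x) : Set R) ⊆ ⋃ p ∈ associatedPrimes R M, (p : Set R) := by
    rw [biUnion_associatedPrimes_eq_compl_regular]
    exact fun a ha => hne a ha
  obtain ⟨p, hp, hle⟩ := (Ideal.subset_union_prime_finite (associatedPrimes.finite R M)
    (f := id) 0 0 fun p hp _ _ => hp.isPrime).1 hsub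
  obtain ⟨hprime, u, hu⟩ := isAssociatedPrime_iff.1 hp
  obtain ⟨b, hb⟩ := h 0 (Nat.succ_pos n) (fun _ => u) fun F hF => by
    obtain ⟨v, rfl⟩ := card_eq_one.1 hF
    have : x v ∈ p := hle (Ideal.subset_span (Set.mem_range_self v))
    rw [hu, Submodule.mem_colon_singleton, Submodule.mem_bot] at this
    rw [koszul, sum_singleton, this, smul_zero]
  have hu0 : u = 0 := by simpa [koszul] using hb ∅ rfl
  refine hprime.ne_top ?_
  rw [hu, hu0]
  exact (Ideal.eq_top_iff_one _).2 (Submodule.mem_colon_singleton.2 (by simp))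

/-- Koszul exactness yields regular sequences. -/
lemma KoszulExact.exists_isWeaklyRegular [IsNoetherianRing R] {x : V → R} {n : ℕ} :
    ∀ {M : Type} [AddCommGroup M] [Module R M] [Module.Finite R M], KoszulExact M x n →
    ∃ rs : List R, rs.length = n ∧ (∀ r ∈ rs, r ∈ Ideal.span (Set.range x)) ∧
      RingTheory.Sequence.IsWeaklyRegular M rs := by
  induction n with
  | zero =>
    intro M _ _ _ _
    exact ⟨[], rfl, by simp, RingTheory.Sequence.IsWeaklyRegular.nil R M⟩
  | succ n ih =>
    intro M _ _ _ h
    obtain ⟨a, ha, hreg⟩ := h.exists_isSMulRegular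
    obtain ⟨rs, h₁, h₂, h₃⟩ := ih (h.quotSMulTop hreg)
    refine ⟨a :: rs, by simp [h₁], ?_, ?_⟩
    · intro r hr
      rcases List.mem_cons.1 hr with rfl | hr
      · exact ha
      · exact h₂ r hr
    · exact (RingTheory.Sequence.isWeaklyRegular_cons_iff M a rs).2 ⟨hreg, h₃⟩

end KoszulRegular

section SerreDepth

open RingTheory.Sequence IsLocalRing

/-- The local ring `A` has a weakly regular sequence of length at least `min ℓ (dim A)` in its
maximal ideal. -/
def SerreDepth (ℓ : ℕ) (A : Type) [CommRing A] [IsLocalRing A] : Prop :=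
  ∃ rs : List A, (∀ r ∈ rs, r ∈ maximalIdeal A) ∧ IsWeaklyRegular A rs ∧
    min (ℓ : ℕ∞) (maximalIdeal A).height ≤ rs.length

lemma SerreDepth.of_ringEquiv {ℓ : ℕ} {A B : Type} [CommRing A] [IsLocalRing A] [CommRing B]
    [IsLocalRing B] (e : A ≃+* B) (h : SerreDepth ℓ A) : SerreDepth ℓ B := by
  obtain ⟨rs, hm, hr, hl⟩ := h
  refine ⟨rs.map e, ?_, ?_, ?_⟩
  · simp only [List.mem_map, forall_exists_index, and_imp, forall_apply_eq_imp_iff₂]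
    intro r hr
    have := hm r hr
    rw [mem_maximalIdeal, mem_nonunits_iff] at this ⊢
    simpa using this
  · refine (AddEquiv.isWeaklyRegular_congr (e := e.toAddEquiv) ?_).1 hr
    rw [List.forall₂_map_right_iff, List.forall₂_same]
    intro r _ x
    simp
  · rw [List.length_map]
    refine le_trans (min_le_min_left _ (le_of_eq ?_)) hl
    have := ringKrullDim_eq_of_ringEquiv e
    rw [← maximalIdeal_height_eq_ringKrullDim, ← maximalIdeal_height_eq_ringKrullDim] at this
    exact (WithBot.coe_injective this).symm

lemma SerreDepth.le_depthIn {ℓ : ℕ} {A : Type} [CommRing A] [IsLocalRing A] [IsNoetherianRing A]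
    (h : SerreDepth ℓ A) :
    min ((ℓ : ℕ∞) : WithBot ℕ∞) (ringKrullDim A) ≤
      ((depthIn A (maximalIdeal A) : ℕ∞) : WithBot ℕ∞) := by
  obtain ⟨rs, hm, hr, hl⟩ := h
  rw [← maximalIdeal_height_eq_ringKrullDim, ← WithBot.coe_min, WithBot.coe_le_coe]
  refine hl.trans (Nat.cast_le.2 (le_csSup ?_
    ⟨rs, rfl, hm, IsRegular.of_isWeaklyRegular_of_mem_maximalIdeal A hm hr⟩))
  obtain ⟨d, hd⟩ := ENat.ne_top_iff_exists.1 (Ideal.height_ne_top (I := maximalIdeal A)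
    (Ideal.IsPrime.ne_top inferInstance))
  refine ⟨d, ?_⟩
  rintro _ ⟨ts, rfl, -, ht⟩
  have h1 := ringKrullDim_add_length_eq_ringKrullDim_of_isRegular ts ht
  rw [← maximalIdeal_height_eq_ringKrullDim (R := A), ← hd] at h1
  have : Nontrivial (A ⧸ Ideal.ofList ts) := by
    apply Ideal.Quotient.nontrivial_iff.2
    intro h
    apply ht.top_ne_smul
    rw [h]
    simp
  have h2 : (0 : WithBot ℕ∞) ≤ ringKrullDim (A ⧸ Ideal.ofList ts) := ringKrullDim_nonneg_of_nontrivial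
  have h3 : (ts.length : WithBot ℕ∞) ≤ d :=
    calc (ts.length : WithBot ℕ∞) = 0 + ts.length := (zero_add _).symm
      _ ≤ _ := add_le_add_left h2 _
      _ = _ := h1
  exact_mod_cast h3

lemma SerreDepth.of_isWeaklyRegular {ℓ : ℕ} {R : Type} [CommRing R] (p : Ideal R) [p.IsPrime]
    {rs : List R} (hm : ∀ r ∈ rs, r ∈ p) (hr : IsWeaklyRegular R rs)
    (hl : min (ℓ : ℕ∞) p.height ≤ rs.length) : SerreDepth ℓ (Localization.AtPrime p) := by
  refine ⟨rs.map (algebraMap R _), ?_, hr.of_isLocalization _ p.primeCompl, ?_⟩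
  · simp only [List.mem_map, forall_exists_index, and_imp, forall_apply_eq_imp_iff₂]
    intro r hr
    rw [← Ideal.mem_comap, ← Ideal.under_def, IsLocalization.AtPrime.under_maximalIdeal _ p]
    exact hm r hr
  · rw [List.length_map]
    refine le_trans (min_le_min_left _ (le_of_eq ?_)) hl
    rw [← IsLocalization.height_under p.primeCompl,
      IsLocalization.AtPrime.under_maximalIdeal _ p]

open Polynomial in
lemma isWeaklyRegular_map_C {A : Type} [CommRing A] {rs : List A} (hr : IsWeaklyRegular A rs)
    {g : A[X]} (hg : g.Monic) : IsWeaklyRegular A[X] (rs.map C ++ [g]) := by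
  rw [isWeaklyRegular_append_iff]
  refine ⟨hr.of_flat (S := A[X]), ?_⟩
  rw [isWeaklyRegular_singleton_iff, isSMulRegular_iff_right_eq_zero_of_smul]
  intro f
  induction f using Submodule.Quotient.induction_on with
  | H f =>
  rw [← Submodule.Quotient.mk_smul, Submodule.Quotient.mk_eq_zero, Submodule.Quotient.mk_eq_zero]
  have hmem (f : A[X]) : f ∈ Ideal.ofList (rs.map C) • (⊤ : Ideal A[X]) ↔
      f.map (Ideal.Quotient.mk (Ideal.ofList rs)) = 0 := by
    rw [smul_eq_mul, Ideal.mul_top, ← Ideal.map_ofList, Ideal.mem_map_C_iff, Polynomial.ext_iff]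
    simp [Ideal.Quotient.eq_zero_iff_mem]
  rw [hmem, hmem, smul_eq_mul, Polynomial.map_mul, (hg.map _).mul_right_eq_zero_iff]
  exact id

open Polynomial in
lemma SerreDepth.polynomial_of_isLocalRing {ℓ : ℕ} {A : Type} [CommRing A] [IsLocalRing A]
    [IsNoetherianRing A] (h : SerreDepth ℓ A) (P : Ideal A[X]) [P.IsPrime]
    (hP : P.comap C = maximalIdeal A) : SerreDepth ℓ (Localization.AtPrime P) := by
  obtain ⟨rs, hm, hr, hl⟩ := h
  have hmem : ∀ r ∈ rs.map C, r ∈ P := by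
    simp only [List.mem_map, forall_exists_index, and_imp, forall_apply_eq_imp_iff₂]
    intro r hr
    rw [← Ideal.mem_comap, hP]
    exact hm r hr
  by_cases eq : P = (P.comap C).map C
  · refine .of_isWeaklyRegular P hmem (hr.of_flat (S := A[X])) ?_
    rw [eq, hP, height_map_C, List.length_map]
    exact hl
  · obtain ⟨g, hg, hPg⟩ := Polynomial.exists_monic_span_sup_map_eq A P
      (hP ▸ maximalIdeal.isMaximal A) eq
    refine .of_isWeaklyRegular P (rs := rs.map C ++ [g]) ?_ (isWeaklyRegular_map_C hr hg) ?_
    · intro r hr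
      rw [List.mem_append, List.mem_singleton] at hr
      rcases hr with hr | rfl
      · exact hmem r hr
      · rw [hPg]
        exact Ideal.mem_sup_right (Ideal.mem_span_singleton_self _)
    · have h1 : (P.height : WithBot ℕ∞) ≤ ringKrullDim A[X] :=
        Ideal.height_le_ringKrullDim_of_ne_top Ideal.IsPrime.ne_top'
      rw [Polynomial.ringKrullDim_of_isNoetherianRing, ← maximalIdeal_height_eq_ringKrullDim] at h1
      have h2 : P.height ≤ (maximalIdeal A).height + 1 := by exact_mod_cast h1
      rw [List.length_append, List.length_map, List.length_singleton, Nat.cast_add, Nat.cast_one]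
      calc min (ℓ : ℕ∞) P.height ≤ min ((ℓ : ℕ∞) + 1) ((maximalIdeal A).height + 1) :=
            min_le_min le_self_add h2
        _ = min (ℓ : ℕ∞) (maximalIdeal A).height + 1 := (min_add_add_right _ _ _)
        _ ≤ _ := by gcongr

open Polynomial in
lemma SerreDepth.polynomial {ℓ : ℕ} {B : Type} [CommRing B] [IsNoetherianRing B] (p : Ideal B[X])
    [p.IsPrime] (h : SerreDepth ℓ (Localization.AtPrime (p.comap C))) :
    SerreDepth ℓ (Localization.AtPrime p) := by
  let q := p.comap C
  let S := (Localization.AtPrime q)[X]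
  let pc := Submonoid.map Polynomial.C.toMonoidHom q.primeCompl
  let : Algebra B[X] S := Polynomial.algebra B (Localization.AtPrime q)
  have : IsLocalization pc S := Polynomial.isLocalization _ _
  let pS := p.map (algebraMap B[X] S)
  have disj : Disjoint (pc : Set B[X]) (p : Set B[X]) := by
    simpa [pc, q] using! Set.disjoint_image_left.mpr
      (Set.disjoint_compl_left_iff_subset.mpr (fun _ a ↦ a))
  have : pS.IsPrime := IsLocalization.isPrime_of_isPrime_disjoint pc _ _ ‹_› disj
  have : IsLocalization.AtPrime (Localization.AtPrime pS) p := by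
    convert IsLocalization.isLocalization_isLocalization_atPrime_isLocalization pc
      (Localization.AtPrime pS) pS
    exact (IsLocalization.under_map_of_isPrime_disjoint pc _ ‹_› disj).symm
  have eq : pS.comap C = maximalIdeal (Localization.AtPrime q) := by
    rw [← IsLocalization.map_under q.primeCompl _ (pS.comap C),
      ← IsLocalization.map_under q.primeCompl _ (maximalIdeal (Localization.AtPrime q))]
    simp only [Ideal.comap_comap, S, pS]
    rw [← Polynomial.algebraMap_eq (R := Localization.AtPrime q),
      ← IsScalarTower.algebraMap_eq B (Localization.AtPrime q) (Localization.AtPrime q)[X],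
      IsScalarTower.algebraMap_eq B B[X] (Localization.AtPrime q)[X], ← Ideal.comap_comap,
      ← Ideal.under_def B[X], IsLocalization.under_map_of_isPrime_disjoint pc _ ‹_› disj]
    simp [q, IsLocalization.AtPrime.under_maximalIdeal (Localization.AtPrime q) q]
  exact (h.polynomial_of_isLocalRing pS eq).of_ringEquiv (IsLocalization.algEquiv p.primeCompl
    (Localization.AtPrime pS) (Localization.AtPrime p)).toRingEquiv

/-- A surjection whose kernel is annihilated by some `s ∉ p` induces an isomorphism of
localizations at `p`. -/
lemma SerreDepth.of_surjective {ℓ : ℕ} {R R' : Type} [CommRing R] [CommRing R'] {π : R →+* R'}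
    (hπ : Function.Surjective π) {p : Ideal R} [p.IsPrime] {s : R} (hs : s ∉ p)
    (hk : ∀ x, π x = 0 → s * x = 0)
    (h : ∀ (q : Ideal R') [q.IsPrime], q.comap π = p → SerreDepth ℓ (Localization.AtPrime q)) :
    SerreDepth ℓ (Localization.AtPrime p) := by
  have hker : RingHom.ker π ≤ p := by
    intro x hx
    have h0 : s * x ∈ p := by
      rw [hk x hx]
      exact p.zero_mem
    exact (Ideal.IsPrime.mem_or_mem inferInstance h0).resolve_left hs
  have hq : (p.map π).IsPrime := Ideal.map_isPrime_of_surjective hπ hker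
  have hc : (p.map π).comap π = p := by
    rw [Ideal.comap_map_of_surjective π hπ]
    exact sup_eq_left.2 hker
  have hmem (x : R) : π x ∈ p.map π ↔ x ∈ p := by
    rw [← Ideal.mem_comap, hc]
  let := ((algebraMap R' (Localization.AtPrime (p.map π))).comp π).toAlgebra
  have ha (x : R) : algebraMap R (Localization.AtPrime (p.map π)) x = algebraMap R' _ (π x) := rfl
  have : IsLocalization.AtPrime (Localization.AtPrime (p.map π)) p := by
    refine ⟨?_, ?_, ?_⟩
    · intro y
      rw [ha]
      exact IsLocalization.map_units _ (⟨π y, fun hy => y.2 ((hmem _).1 hy)⟩ :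
        (p.map π).primeCompl)
    · intro z
      obtain ⟨⟨a, b⟩, hab⟩ := IsLocalization.surj (p.map π).primeCompl z
      obtain ⟨a, rfl⟩ := hπ a
      obtain ⟨b', hb'⟩ := hπ b
      refine ⟨⟨a, b', fun hb => b.2 ?_⟩, ?_⟩
      · rw [← hb']
        exact (hmem _).2 hb
      · simpa [ha, hb'] using hab
    · intro x y hxy
      rw [ha, ha] at hxy
      obtain ⟨c, hc⟩ := IsLocalization.exists_of_eq (M := (p.map π).primeCompl) hxy
      obtain ⟨c', hc'⟩ := hπ c
      have hcp : c' ∉ p := fun hcp => c.2 (by rw [← hc']; exact (hmem _).2 hcp)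
      refine ⟨⟨s * c', fun hsc => (Ideal.IsPrime.mem_or_mem inferInstance hsc).elim hs hcp⟩, ?_⟩
      have := hk (c' * (x - y)) (by rw [map_mul, hc', map_sub, mul_sub, hc, sub_self])
      linear_combination this
  exact (h (p.map π) hc).of_ringEquiv (IsLocalization.algEquiv p.primeCompl
    (Localization.AtPrime (p.map π)) (Localization.AtPrime p)).toRingEquiv

end SerreDepth

section Localization

variable {V : Type} [DecidableEq V] {k : Type} [Field k]

variable (k) in
/-- The class of a variable in the Stanley–Reisner ring. -/
noncomputable def srX (K : SComplex V) (v : V) : SRRing k K :=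
  Ideal.Quotient.mk (srIdeal k K) (MvPolynomial.X v)

lemma prod_srX_eq_zero {K : SComplex V} {s : Finset V} (hs : s ∉ K.faces) :
    ∏ v ∈ s, srX k K v = 0 := by
  simp only [srX]
  rw [← map_prod, Ideal.Quotient.eq_zero_iff_mem]
  exact Ideal.subset_span ⟨s, hs, rfl⟩

lemma srX_link_self (K : SComplex V) (v : V) : srX k (K.link {v}) v = 0 := by
  simpa using prod_srX_eq_zero (k := k) (K := K.link {v}) (s := {v}) (by simp [SComplex.link])

lemma notMem_link {K : SComplex V} {v : V} {s : Finset V} (hs : s ∉ (K.link {v}).faces)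
    (hv : v ∉ s) : insert v s ∉ K.faces := fun h =>
  hs (mem_filter.2 ⟨K.down_closed h (subset_insert _ _), disjoint_singleton_left.2 hv, h⟩)

variable (k) in
/-- The evaluation inducing the projection from the Stanley–Reisner ring of `K` to the polynomial
ring over that of the link of `v`, whose variable is the image of `v`. -/
noncomputable def toLinkAux (K : SComplex V) (v : V) :
    MvPolynomial V k →+* Polynomial (SRRing k (K.link {v})) :=
  MvPolynomial.eval₂Hom (Polynomial.C.comp (algebraMap k _)) fun w =>
    if w = v then Polynomial.X else Polynomial.C (srX k (K.link {v}) w)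

lemma toLinkAux_X_self (K : SComplex V) (v : V) :
    toLinkAux k K v (MvPolynomial.X v) = Polynomial.X := by
  simp [toLinkAux]

lemma toLinkAux_X_of_ne (K : SComplex V) {v w : V} (h : w ≠ v) :
    toLinkAux k K v (MvPolynomial.X w) = Polynomial.C (srX k (K.link {v}) w) := by
  simp [toLinkAux, h]

lemma toLinkAux_prod (K : SComplex V) {v : V} {s : Finset V} (hv : v ∉ s) :
    toLinkAux k K v (∏ w ∈ s, MvPolynomial.X w) =
      Polynomial.C (∏ w ∈ s, srX k (K.link {v}) w) := by
  rw [map_prod, map_prod]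
  exact prod_congr rfl fun w hw => toLinkAux_X_of_ne K (ne_of_mem_of_not_mem hw hv)

lemma srIdeal_le_ker_toLinkAux (K : SComplex V) (v : V) :
    srIdeal k K ≤ RingHom.ker (toLinkAux k K v) := by
  rw [srIdeal, Ideal.span_le]
  rintro _ ⟨s, hs, rfl⟩
  rw [SetLike.mem_coe, RingHom.mem_ker]
  beta_reduce
  by_cases hv : v ∈ s
  · rw [← insert_erase hv, prod_insert (notMem_erase v s), map_mul,
      toLinkAux_prod K (notMem_erase v s), prod_srX_eq_zero, map_zero, mul_zero]
    intro h
    apply hs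
    have := (mem_filter.1 h).2.2
    rwa [← insert_eq, insert_erase hv] at this
  · rw [toLinkAux_prod K hv, prod_srX_eq_zero, map_zero]
    exact fun h => hs (mem_filter.1 h).1

variable (k) in
/-- The projection from the Stanley–Reisner ring of `K` to the polynomial ring over that of the
link of a vertex. -/
noncomputable def toLink (K : SComplex V) (v : V) :
    SRRing k K →+* Polynomial (SRRing k (K.link {v})) :=
  Ideal.Quotient.lift (srIdeal k K) (toLinkAux k K v) fun _ h => srIdeal_le_ker_toLinkAux K v h

lemma toLink_mk (K : SComplex V) (v : V) (f : MvPolynomial V k) :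
    toLink k K v (Ideal.Quotient.mk _ f) = toLinkAux k K v f := rfl

lemma toLink_srX_of_ne (K : SComplex V) {v w : V} (h : w ≠ v) :
    toLink k K v (srX k K w) = Polynomial.C (srX k (K.link {v}) w) :=
  toLinkAux_X_of_ne K h

lemma toLink_surjective (K : SComplex V) (v : V) : Function.Surjective (toLink k K v) := by
  rw [← RingHom.range_eq_top, eq_top_iff]
  have hX : Polynomial.X ∈ (toLink k K v).range :=
    ⟨Ideal.Quotient.mk _ (MvPolynomial.X v), toLinkAux_X_self K v⟩
  have hC (a : SRRing k (K.link {v})) : Polynomial.C a ∈ (toLink k K v).range := by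
    obtain ⟨f, rfl⟩ := Ideal.Quotient.mk_surjective a
    induction f using MvPolynomial.induction_on with
    | C a =>
      refine ⟨Ideal.Quotient.mk _ (MvPolynomial.C a), ?_⟩
      rw [toLink_mk, toLinkAux, MvPolynomial.coe_eval₂Hom, MvPolynomial.eval₂_C]
      rfl
    | add f g hf hg =>
      rw [map_add, map_add]
      exact add_mem hf hg
    | mul_X f w hf =>
      rw [map_mul, map_mul]
      refine mul_mem hf ?_
      change Polynomial.C (srX k (K.link {v}) w) ∈ _
      by_cases hw : w = v
      · rw [hw, srX_link_self, map_zero]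
        exact zero_mem _
      · exact ⟨_, toLink_srX_of_ne K hw⟩
  intro f _
  induction f using Polynomial.induction_on' with
  | add f g hf hg => exact add_mem (hf trivial) (hg trivial)
  | monomial n a =>
    rw [← Polynomial.C_mul_X_pow_eq_monomial]
    exact mul_mem (hC a) (pow_mem hX n)

lemma srX_mul_eq_zero_of_toLink_eq_zero {K : SComplex V} {v : V} {a : SRRing k K}
    (h : toLink k K v a = 0) : srX k K v * a = 0 := by
  obtain ⟨f, rfl⟩ := Ideal.Quotient.mk_surjective a
  let J : Ideal (MvPolynomial V k) := (srIdeal k K).colon {MvPolynomial.X v}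
  have hJ (g : MvPolynomial V k) : g ∈ J ↔ g * MvPolynomial.X v ∈ srIdeal k K := by
    rw [Submodule.mem_colon_singleton, smul_eq_mul]
  let σ : MvPolynomial V k →+* MvPolynomial V k ⧸ J := MvPolynomial.eval₂Hom (algebraMap k _)
    fun w => if w = v then 0 else Ideal.Quotient.mk J (MvPolynomial.X w)
  have hσ : ∀ g ∈ srIdeal k (K.link {v}), σ g = 0 := by
    suffices srIdeal k (K.link {v}) ≤ RingHom.ker σ from this
    rw [srIdeal, Ideal.span_le]
    rintro _ ⟨s, hs, rfl⟩
    rw [SetLike.mem_coe, RingHom.mem_ker, map_prod]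
    by_cases hv : v ∈ s
    · exact prod_eq_zero hv (by simp [σ])
    · rw [prod_congr rfl (g := fun w => Ideal.Quotient.mk J (MvPolynomial.X w)), ← map_prod,
        Ideal.Quotient.eq_zero_iff_mem, hJ, mul_comm, ← prod_insert hv]
      · exact Ideal.subset_span ⟨_, notMem_link hs hv, rfl⟩
      · intro w hw
        simp [σ, ne_of_mem_of_not_mem hw hv]
  let ρ : Polynomial (SRRing k (K.link {v})) →+* MvPolynomial V k ⧸ J :=
    Polynomial.eval₂RingHom (Ideal.Quotient.lift _ σ hσ) (Ideal.Quotient.mk J (MvPolynomial.X v))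
  have hρ : ρ.comp (toLinkAux k K v) = Ideal.Quotient.mk J := by
    apply MvPolynomial.ringHom_ext
    · intro a
      have : algebraMap k (SRRing k (K.link {v})) a =
        Ideal.Quotient.mk (srIdeal k (K.link {v})) (MvPolynomial.C a) := rfl
      simp only [RingHom.comp_apply, toLinkAux, MvPolynomial.coe_eval₂Hom, MvPolynomial.eval₂_C,
        ρ, Polynomial.coe_eval₂RingHom, Polynomial.eval₂_C, this, Ideal.Quotient.lift_mk, σ]
      rfl
    · intro w
      rw [RingHom.comp_apply]
      by_cases hw : w = v
      · rw [hw, toLinkAux_X_self]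
        simp [ρ]
      · rw [toLinkAux_X_of_ne K hw]
        simp [ρ, srX, σ, hw]
  have hf : Ideal.Quotient.mk J f = 0 := by
    rw [← hρ, RingHom.comp_apply, ← toLink_mk, h, map_zero]
  rw [Ideal.Quotient.eq_zero_iff_mem, hJ] at hf
  rwa [mul_comm, srX, ← map_mul, Ideal.Quotient.eq_zero_iff_mem]

lemma rank_link_le (K : SComplex V) (v : V) : (K.link {v}).rank ≤ K.rank - 1 := by
  refine Finset.sup_le fun G hG => ?_
  have hG := (mem_filter.1 hG).2
  have := Finset.le_sup (f := Finset.card) hG.2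
  rw [card_union_of_disjoint hG.1, card_singleton] at this
  exact Nat.le_sub_of_add_le (by rwa [add_comm])

lemma le_of_forall_srX_mem {K : SComplex V} {p q : Ideal (SRRing k K)} [p.IsPrime]
    (hp : ∀ v, srX k K v ∈ p) (hq : ∀ v, srX k K v ∈ q) : p ≤ q := by
  have key (I : Ideal (SRRing k K)) (hI : ∀ v, srX k K v ∈ I) (f : MvPolynomial V k) :
      Ideal.Quotient.mk _ f ∈ I ↔
        Ideal.Quotient.mk _ (MvPolynomial.C f.constantCoeff) ∈ I := by
    rw [← Ideal.Quotient.eq_zero_iff_mem, ← Ideal.Quotient.eq_zero_iff_mem (I := I)]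
    have : (Ideal.Quotient.mk I).comp (Ideal.Quotient.mk (srIdeal k K)) =
        ((Ideal.Quotient.mk I).comp (Ideal.Quotient.mk (srIdeal k K))).comp
          ((MvPolynomial.C).comp MvPolynomial.constantCoeff) := by
      apply MvPolynomial.ringHom_ext
      · intro a
        simp
      · intro v
        simpa [srX] using Ideal.Quotient.eq_zero_iff_mem.2 (hI v)
    exact (congrArg (· = 0) (DFunLike.congr_fun this f)).to_iff
  intro a ha
  obtain ⟨f, rfl⟩ := Ideal.Quotient.mk_surjective a
  rw [key q hq]
  rw [key p hp] at ha
  by_cases hf : f.constantCoeff = 0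
  · simp [hf]
  · refine absurd (Ideal.eq_top_of_isUnit_mem _ ha ?_) (Ideal.IsPrime.ne_top inferInstance)
    exact ((IsUnit.mk0 _ hf).map MvPolynomial.C).map (Ideal.Quotient.mk (srIdeal k K))

variable [Fintype V]

lemma height_le_rank {K : SComplex V} {p : Ideal (SRRing k K)} [p.IsPrime]
    (hp : ∀ v, srX k K v ∈ p) : p.height ≤ K.rank := by
  let θ (j : ℕ) : SRRing k K := ∑ G ∈ K.faces.filter fun G => G.card = j, ∏ v ∈ G, srX k K v
  let s : Finset (SRRing k K) := by classical exact (Icc 1 K.rank).image θ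
  have hs : s.card ≤ K.rank := by
    classical
    exact card_image_le.trans (by simp)
  have hθ (j : ℕ) (h1 : 1 ≤ j) (h2 : j ≤ K.rank) : θ j ∈ s := by
    classical
    exact mem_image_of_mem θ (mem_Icc.2 ⟨h1, h2⟩)
  refine (Ideal.height_le_card_of_mem_minimalPrimes_span_finset (s := s) ?_).trans
    (Nat.cast_le.2 hs)
  refine ⟨⟨inferInstance, ?_⟩, ?_⟩
  · rw [Ideal.span_le]
    intro a ha
    classical
    obtain ⟨j, hj, rfl⟩ := mem_image.1 (mem_coe.1 ha)
    refine sum_mem fun G hG => ?_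
    obtain ⟨v, hv⟩ := card_pos.1 ((mem_filter.1 hG).2 ▸ (mem_Icc.1 hj).1)
    exact Ideal.mem_of_dvd _ (dvd_prod_of_mem _ hv) (hp v)
  · rintro q ⟨hq, hsq⟩ -
    refine le_of_forall_srX_mem hp ?_
    by_contra! hne
    obtain ⟨v, hv⟩ := hne
    classical
    let F : Finset V := univ.filter fun v => srX k K v ∉ q
    have hF : ∏ v ∈ F, srX k K v ∉ q := by
      rw [hq.prod_mem_iff]
      simp [F]
    have hFK : F ∈ K.faces := by
      by_contra h
      exact hF (prod_srX_eq_zero (k := k) h ▸ q.zero_mem)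
    have hFc := hsq (Ideal.subset_span (hθ F.card (card_pos.2 ⟨v, by simpa [F] using hv⟩)
      (Finset.le_sup (f := Finset.card) hFK)))
    have hmem : F ∈ K.faces.filter fun G => G.card = F.card := mem_filter.2 ⟨hFK, rfl⟩
    simp only [θ] at hFc
    rw [← add_sum_erase _ _ hmem] at hFc
    refine hF ((Ideal.add_mem_iff_left _ (sum_mem fun G hG => ?_)).1 hFc)
    rw [mem_erase, mem_filter] at hG
    have : ¬ G ⊆ F := fun h => hG.1 (eq_of_subset_of_card_le h hG.2.2.ge)
    obtain ⟨w, hwG, hwF⟩ := not_subset.1 this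
    exact Ideal.mem_of_dvd _ (dvd_prod_of_mem _ hwG) (by simpa [F] using hwF)

lemma LinkAcyclic.serreDepth_of_forall_mem {K : SComplex V} {D ℓ : ℕ} (h : LinkAcyclic k K D ℓ)
    (hD : K.rank ≤ D) (p : Ideal (SRRing k K)) [p.IsPrime] (hp : ∀ v, srX k K v ∈ p) :
    SerreDepth ℓ (Localization.AtPrime p) := by
  obtain ⟨rs, hl, hm, hr⟩ := (koszulExact_srRing (n := min ℓ D) h (min_le_right _ _)
    (min_le_left _ _)).exists_isWeaklyRegular
  refine .of_isWeaklyRegular p (fun r hr => ?_) hr ?_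
  · refine Ideal.span_le.2 ?_ (hm r hr)
    rintro _ ⟨v, rfl⟩
    exact hp v
  · rw [hl, Nat.mono_cast.map_min]
    exact min_le_min_left _ ((height_le_rank hp).trans (Nat.cast_le.2 hD))

lemma LinkAcyclic.serreDepth {K : SComplex V} {D ℓ : ℕ} (h : LinkAcyclic k K D ℓ)
    (hD : K.rank ≤ D) (p : Ideal (SRRing k K)) [p.IsPrime] :
    SerreDepth ℓ (Localization.AtPrime p) := by
  classical
  induction hn : (univ.filter fun v => srX k K v ∉ p).card using Nat.strong_induction_on
    generalizing K D with
  | _ n ih =>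
  by_cases hp : ∀ v, srX k K v ∈ p
  · exact h.serreDepth_of_forall_mem hD p hp
  push Not at hp
  obtain ⟨v, hv⟩ := hp
  refine .of_surjective (toLink_surjective K v) hv
    (fun _ => srX_mul_eq_zero_of_toLink_eq_zero) fun q _ hq => .polynomial q ?_
  refine ih _ ?_ (h.link v) ((rank_link_le K v).trans (Nat.sub_le_sub_right hD 1)) _ rfl
  rw [← hn]
  refine card_lt_card (ssubset_iff_of_subset ?_ |>.2 ⟨v, by simpa using hv, ?_⟩)
  · intro w
    simp only [mem_filter, mem_univ, true_and, Ideal.mem_comap, ← hq]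
    intro hw
    have hwv : w ≠ v := by
      rintro rfl
      rw [srX_link_self, map_zero] at hw
      exact hw q.zero_mem
    rwa [toLink_srX_of_ne K hwv]
  · simp [srX_link_self]

end Localization

end SComplex

/-- If `H̃_{i-1}([Δ]_{>j}; k) = 0` whenever `i + j < d` and `0 ≤ i ≤ ℓ`
(where `d = dim k[Δ]`), then `k[Δ]` satisfies Serre's condition `(S_ℓ)`. -/
theorem serre_of_vanishing_of_truncations {V : Type} [DecidableEq V] [Fintype V]
    (k : Type) [Field k] (K : SComplex V) (ℓ : ℕ)
    (h : ∀ i j : ℕ, i + j < K.rank → i ≤ ℓ → SComplex.HVanish k (K.trunc j) i) :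
    SComplex.SerreS k ℓ K := by
  intro p hp
  exact ((SComplex.linkAcyclic_of_trunc le_rfl h).serreDepth le_rfl p).le_depthIn
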